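/- Let n ≥ 1, 0 < λ < n, 1 ≤ p, q ≤ ∞ and t, s ∈ ℝ. Then the discrete fractional integral operator 𝓘_λ is bounded from l(p,t) to l(q,s) (i.e., there is a constant C with ‖𝓘_λ a‖_{l(q,s)} ≤ C‖a‖_{l(p,t)} for all nonnegative sequences a) if and only if the tuple (q, p, s, t) satisfies at least one of the conditions C₁, C₃, C₄. -/

import Mathlib

open scoped ENNReal NNReal BigOperators
open MeasureTheory

noncomputable section

/-- `1/q` for `q ∈ [0,∞]`, with the convention `1/∞ = 0`. -/
def iv (q : ℝ≥0∞) : ℝ := q⁻¹.toReal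

/-- The dual exponent `q'` of `q ∈ [1,∞]`, defined by `1/q + 1/q' = 1`. -/
def dualExp (q : ℝ≥0∞) : ℝ≥0∞ :=
  if q = ∞ then 1 else if q = 1 then ∞ else ENNReal.ofReal (q.toReal / (q.toReal - 1))

/-- Euclidean norm `|k|` of an integer vector `k ∈ ℤⁿ`. -/
def znorm {n : ℕ} (k : Fin n → ℤ) : ℝ := Real.sqrt (∑ i, ((k i : ℝ)) ^ 2)

/-- Japanese bracket `⟨k⟩ = (1+|k|²)^{1/2}` of an integer vector. -/
def zbr {n : ℕ} (k : Fin n → ℤ) : ℝ := Real.sqrt (1 + ∑ i, ((k i : ℝ)) ^ 2)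

/-- Euclidean norm `|x|` on `ℝⁿ` (realized as `Fin n → ℝ`). -/
def rnorm {n : ℕ} (x : Fin n → ℝ) : ℝ := Real.sqrt (∑ i, (x i) ^ 2)

/-- Japanese bracket `⟨x⟩ = (1+|x|²)^{1/2}` on `ℝⁿ`. -/
def rbr {n : ℕ} (x : Fin n → ℝ) : ℝ := Real.sqrt (1 + ∑ i, (x i) ^ 2)

/-- The weighted norm `‖a‖_{l(q,s)}` (weight `⟨k⟩^s`) of a nonnegative sequence on `ℤⁿ`,
valued in `ℝ≥0∞`.  For `q = ∞` it is `sup_k a_k ⟨k⟩^s`, otherwise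
`(∑_k (a_k ⟨k⟩^s)^q)^{1/q}`. -/
def lns (n : ℕ) (q : ℝ≥0∞) (s : ℝ) (a : (Fin n → ℤ) → ℝ≥0∞) : ℝ≥0∞ :=
  if q = ∞ then ⨆ k, a k * ENNReal.ofReal (zbr k ^ s)
  else (∑' k, (a k * ENNReal.ofReal (zbr k ^ s)) ^ q.toReal) ^ (1 / q.toReal)

/-- Convolution of (nonnegative) sequences on `ℤⁿ`: `(a∗b)(k) = ∑_j a_{k-j} b_j`. -/
def dconv {n : ℕ} (a b : (Fin n → ℤ) → ℝ≥0∞) : (Fin n → ℤ) → ℝ≥0∞ :=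
  fun k => ∑' j, a (k - j) * b j

/-- The weighted norm `‖f‖_{L(q,s)}` (weight `⟨x⟩^s`) of a nonnegative function on `ℝⁿ`.
For `q = ∞` it is `ess sup_x f(x) ⟨x⟩^s`, otherwise `(∫ (f(x) ⟨x⟩^s)^q dx)^{1/q}`. -/
def Lns (n : ℕ) (q : ℝ≥0∞) (s : ℝ) (f : (Fin n → ℝ) → ℝ≥0∞) : ℝ≥0∞ :=
  if q = ∞ then essSup (fun x => f x * ENNReal.ofReal (rbr x ^ s)) volume
  else (∫⁻ x, (f x * ENNReal.ofReal (rbr x ^ s)) ^ q.toReal) ^ (1 / q.toReal)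

/-- The power-weighted norm `‖f‖_{𝕃(q,s)}` (weight `|x|^s`) of a nonnegative function on `ℝⁿ`. -/
def Pns (n : ℕ) (q : ℝ≥0∞) (s : ℝ) (f : (Fin n → ℝ) → ℝ≥0∞) : ℝ≥0∞ :=
  if q = ∞ then essSup (fun x => f x * ENNReal.ofReal (rnorm x ^ s)) volume
  else (∫⁻ x, (f x * ENNReal.ofReal (rnorm x ^ s)) ^ q.toReal) ^ (1 / q.toReal)

/-- Convolution of (nonnegative) functions on `ℝⁿ`: `(f∗g)(x) = ∫ f(x-y) g(y) dy`. -/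
def cconv {n : ℕ} (f g : (Fin n → ℝ) → ℝ≥0∞) : (Fin n → ℝ) → ℝ≥0∞ :=
  fun x => ∫⁻ y, f (x - y) * g y

/-- The discrete fractional integral operator `(𝓘_λ a)(k) = ∑_{j ≠ k} a_j / |k-j|^{n-λ}`. -/
def dRiesz (n : ℕ) (lam : ℝ) (a : (Fin n → ℤ) → ℝ≥0∞) : (Fin n → ℤ) → ℝ≥0∞ :=
  fun k => ∑' j, if j = k then 0 else a j * ENNReal.ofReal (znorm (k - j) ^ (lam - (n : ℝ)))

/-- The Riesz potential `(I_λ f)(x) = ∫ f(y) / |x-y|^{n-λ} dy`. -/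
def cRiesz (n : ℕ) (lam : ℝ) (f : (Fin n → ℝ) → ℝ≥0∞) : (Fin n → ℝ) → ℝ≥0∞ :=
  fun x => ∫⁻ y, f y * ENNReal.ofReal (rnorm (x - y) ^ (lam - (n : ℝ)))

/-- Condition `𝒜₁`. -/
def condA1 (n : ℕ) (q q₁ q₂ : ℝ≥0∞) (s s₁ s₂ : ℝ) : Prop :=
  s ≤ s₁ ∧ s ≤ s₂ ∧ 0 ≤ s₁ + s₂ ∧
  1 + max (iv q + s / (n : ℝ)) 0 < max (iv q₁ + s₁ / (n : ℝ)) 0 + max (iv q₂ + s₂ / (n : ℝ)) 0 ∧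
  iv q + s / (n : ℝ) ≤ iv q₁ + s₁ / (n : ℝ) ∧
  iv q + s / (n : ℝ) ≤ iv q₂ + s₂ / (n : ℝ) ∧
  1 ≤ iv q₁ + s₁ / (n : ℝ) + iv q₂ + s₂ / (n : ℝ) ∧
  (iv q + s / (n : ℝ) = iv q₁ + s₁ / (n : ℝ) → q = q₁ ∧ s = s₁) ∧
  (iv q + s / (n : ℝ) = iv q₂ + s₂ / (n : ℝ) → q = q₂ ∧ s = s₂) ∧
  (1 = iv q₁ + s₁ / (n : ℝ) + iv q₂ + s₂ / (n : ℝ) → dualExp q₁ = q₂ ∧ -s₁ = s₂)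

/-- Condition `𝒜₂`. -/
def condA2 (q q₁ q₂ : ℝ≥0∞) (s s₁ s₂ : ℝ) : Prop :=
  s = 0 ∧ s₁ = 0 ∧ s₂ = 0 ∧
  ((q = q₁ ∧ q₂ = 1) ∨ (q = q₂ ∧ q₁ = 1) ∨ (q = ∞ ∧ iv q₁ + iv q₂ = 1))

/-- Condition `𝒜₃`. -/
def condA3 (n : ℕ) (q q₁ q₂ : ℝ≥0∞) (s s₁ s₂ : ℝ) : Prop :=
  s ≤ s₁ ∧ s ≤ s₂ ∧ iv q₁ + iv q₂ = 1 ∧ s₁ + s₂ = 0 ∧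
  iv q + s / (n : ℝ) < 0 ∧ 0 ≤ iv q₁ + s₁ / (n : ℝ) ∧ 0 ≤ iv q₂ + s₂ / (n : ℝ)

/-- Condition `𝒜₄`. -/
def condA4 (n : ℕ) (q q₁ q₂ : ℝ≥0∞) (s s₁ s₂ : ℝ) : Prop :=
  s ≤ s₁ ∧ s ≤ s₂ ∧ 0 ≤ s₁ + s₂ ∧
  1 + (iv q + s / (n : ℝ)) = iv q₁ + s₁ / (n : ℝ) + iv q₂ + s₂ / (n : ℝ) ∧
  iv q ≤ iv q₁ + iv q₂ ∧
  iv q + s / (n : ℝ) < iv q₁ + s₁ / (n : ℝ) ∧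
  iv q + s / (n : ℝ) < iv q₂ + s₂ / (n : ℝ) ∧
  0 < iv q + s / (n : ℝ) ∧
  ((s = s₁ ∨ s = s₂) → q ≠ ∞ ∧ q₁ ≠ 1 ∧ q₂ ≠ 1)

/-- Condition `𝒞₁`. -/
def condC1 (n : ℕ) (lam : ℝ) (q p : ℝ≥0∞) (s t : ℝ) : Prop :=
  s ≤ t ∧
  lam / (n : ℝ) + max (iv q + s / (n : ℝ)) 0 < max (iv p + t / (n : ℝ)) 0 ∧
  lam / (n : ℝ) + iv q + s / (n : ℝ) ≤ 1 ∧
  (lam / (n : ℝ) + iv q + s / (n : ℝ) = 1 → q = ∞ ∧ s = (n : ℝ) - lam)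

/-- Condition `𝒞₃`. -/
def condC3 (n : ℕ) (lam : ℝ) (q p : ℝ≥0∞) (s t : ℝ) : Prop :=
  s ≤ t ∧ p = 1 ∧ t = lam - (n : ℝ) ∧ iv q + s / (n : ℝ) < 0

/-- Condition `𝒞₄`. -/
def condC4 (n : ℕ) (lam : ℝ) (q p : ℝ≥0∞) (s t : ℝ) : Prop :=
  s ≤ t ∧
  lam / (n : ℝ) + iv q + s / (n : ℝ) = iv p + t / (n : ℝ) ∧
  iv q ≤ iv p ∧
  0 < iv q + s / (n : ℝ) ∧
  iv p + t / (n : ℝ) < 1 ∧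
  (s = t → q ≠ ∞ ∧ p ≠ 1)

end

/-!
Absorbing the weights into the kernel turns the claim into the boundedness from `ℓ^p` to `ℓ^q` of
`⟨k⟩^s |k-j|^{λ-n} ⟨j⟩^{-t}` off the diagonal. By duality this is a bound for the bilinear form
`∑ K(k,j) f(j)^{1-x} h(k)^{1-y}` over `f`, `h` in the unit ball of `ℓ¹`, where `x = 1 - 1/p` and
`y = 1/q` (`bil_of_op`, `op_of_bil`). With `σ = s` and `τ = -t` the form is symmetric under
`(x, σ) ↔ (y, τ)`, and multiplying `𝒞₁`, `𝒞₃`, `𝒞₄` by `n` merges them into one symmetric system of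
exponent inequalities, `Good` (`good_iff_cond`).

Sufficiency (`Good.bil`). Off the diagonal `|k-j|` is comparable to `⟨k-j⟩`. For
`x + y ≤ 1` the kernel splits (`wKer_le`) into two far parts, where one of `⟨k⟩`, `⟨j⟩` dominates and
`K` is at most `⟨k⟩^{-A} ⟨j⟩^{-B}` or its transpose, and a near part with `⟨k-j⟩ ≲ ⟨k⟩ ~ ⟨j⟩`. All of
them are handled by one Schur test (`schur_test`), except for the unweighted translation-invariant
case on the critical line, which is the discrete Hardy–Littlewood–Sobolev inequality (`hls`). For
`x + y > 1` all relevant inequalities are strict, and Hölder's inequality with a summable weight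
lowers `x` to the case `x + y = 1` (`BilBdd.lower`).

Necessity (`HomBdd.good`). Each inequality is tested: two adjacent far points give `σ + τ ≤ 0`
(`nec_st`); a point mass at the origin against a far point mass gives `λ + ny + σ ≤ n` (`nec_U`);
and `f = h = ⟨k⟩^{-n-δ}` gives the scaling inequality (`nec_W`). The endpoint exclusions come from the
critical sequence `⟨k⟩^{-n}` cut off at a large radius, whose mass grows logarithmically
(`crit_test`, `nec_xy`).
-/

/-! ### The Japanese bracket and lattice point counts -/

theorem zbr_one_le {n : ℕ} (k : Fin n → ℤ) : 1 ≤ zbr k := by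
  unfold zbr
  rw [Real.one_le_sqrt]
  have : 0 ≤ ∑ i, ((k i : ℝ)) ^ 2 := Finset.sum_nonneg fun i _ => sq_nonneg _
  linarith

theorem zbr_pos {n : ℕ} (k : Fin n → ℤ) : 0 < zbr k := lt_of_lt_of_le one_pos (zbr_one_le k)

theorem zbr_sq {n : ℕ} (k : Fin n → ℤ) : zbr k ^ 2 = 1 + ∑ i, ((k i : ℝ)) ^ 2 := by
  unfold zbr
  rw [Real.sq_sqrt]
  have : 0 ≤ ∑ i, ((k i : ℝ)) ^ 2 := Finset.sum_nonneg fun i _ => sq_nonneg _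
  linarith

theorem zbr_neg {n : ℕ} (k : Fin n → ℤ) : zbr (-k) = zbr k := by
  simp [zbr]

theorem zbr_sub_comm {n : ℕ} (k j : Fin n → ℤ) : zbr (k - j) = zbr (j - k) := by
  rw [← zbr_neg, neg_sub]

/-- The Japanese bracket is quasi-subadditive. -/
theorem zbr_add_le {n : ℕ} (k j : Fin n → ℤ) : zbr (k + j) ≤ 2 * (zbr k + zbr j) := by
  have hk := zbr_pos k
  have hj := zbr_pos j
  refine le_of_sq_le_sq ?_ (by positivity)
  have h1 : ∑ i, (((k + j) i : ℤ) : ℝ) ^ 2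
      ≤ 2 * ∑ i, ((k i : ℝ)) ^ 2 + 2 * ∑ i, ((j i : ℝ)) ^ 2 := by
    rw [Finset.mul_sum, Finset.mul_sum, ← Finset.sum_add_distrib]
    refine Finset.sum_le_sum fun i _ => ?_
    simp only [Pi.add_apply, Int.cast_add]
    nlinarith [sq_nonneg ((k i : ℝ) - j i)]
  have h2 := zbr_sq (k + j)
  have h3 := zbr_sq k
  have h4 := zbr_sq j
  nlinarith

theorem zbr_le_of_sub {n : ℕ} (k j : Fin n → ℤ) : zbr k ≤ 2 * (zbr (k - j) + zbr j) := by
  simpa using zbr_add_le (k - j) j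

theorem zbr_sub_le {n : ℕ} (k j : Fin n → ℤ) : zbr (k - j) ≤ 2 * (zbr k + zbr j) := by
  simpa [sub_eq_add_neg, zbr_neg] using zbr_add_le k (-j)

theorem abs_le_zbr {n : ℕ} (k : Fin n → ℤ) (i : Fin n) : |(k i : ℝ)| ≤ zbr k := by
  refine abs_le_of_sq_le_sq ?_ (zbr_pos k).le
  rw [zbr_sq]
  have := Finset.single_le_sum (f := fun i => ((k i : ℝ)) ^ 2) (fun i _ => sq_nonneg _)
    (Finset.mem_univ i)
  linarith

/-- Away from the origin `|k|` and `⟨k⟩` are comparable. -/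
theorem znorm_compare {n : ℕ} (k : Fin n → ℤ) (hk : k ≠ 0) :
    zbr k ≤ 2 * znorm k ∧ znorm k ≤ 2 * zbr k := by
  obtain ⟨i, hi⟩ : ∃ i, k i ≠ 0 := by
    by_contra! h
    exact hk (funext h)
  have h1 : (1 : ℝ) ≤ ∑ i, ((k i : ℝ)) ^ 2 := by
    have h0 := Finset.single_le_sum (f := fun i => ((k i : ℝ)) ^ 2) (fun i _ => sq_nonneg _)
      (Finset.mem_univ i)
    have h2 : (1 : ℤ) ≤ (k i) ^ 2 := by
      have := sq_nonneg (k i)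
      have h3 : (k i) ^ 2 ≠ 0 := pow_ne_zero 2 hi
      omega
    have h3 : (1 : ℝ) ≤ (k i : ℝ) ^ 2 := by exact_mod_cast h2
    exact h3.trans h0
  have hz : znorm k ^ 2 = ∑ i, ((k i : ℝ)) ^ 2 := by
    unfold znorm
    rw [Real.sq_sqrt (by linarith)]
  have hz0 : 0 ≤ znorm k := Real.sqrt_nonneg _
  have hb := zbr_sq k
  have hb0 := zbr_pos k
  constructor
  · refine le_of_sq_le_sq ?_ (by positivity)
    nlinarith
  · refine le_of_sq_le_sq ?_ (by positivity)
    nlinarith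

/-- Powers of comparable positive numbers are comparable. -/
theorem rpow_compare {a b Q : ℝ} (ha : 0 < a) (hQ : 1 ≤ Q) (h1 : a ≤ Q * b) (h2 : b ≤ Q * a)
    (e : ℝ) : b ^ e ≤ Q ^ |e| * a ^ e := by
  have hQ0 : 0 < Q := by linarith
  have hb : 0 < b := by
    by_contra! h
    nlinarith
  rcases le_total 0 e with he | he
  · rw [abs_of_nonneg he, ← Real.mul_rpow hQ0.le ha.le]
    exact Real.rpow_le_rpow hb.le h2 he
  · rw [abs_of_nonpos he]
    have h3 : (Q * b) ^ e ≤ a ^ e := Real.rpow_le_rpow_of_nonpos ha h1 he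
    rw [Real.mul_rpow hQ0.le hb.le] at h3
    have h4 : Q ^ (-e) * Q ^ e = 1 := by
      rw [← Real.rpow_add hQ0]; simp
    calc b ^ e = Q ^ (-e) * (Q ^ e * b ^ e) := by rw [← mul_assoc, h4, one_mul]
      _ ≤ Q ^ (-e) * a ^ e := by gcongr

/-- A ball of radius `R` in `ℤⁿ` holds at most `C Rⁿ` points. -/
theorem count_le (n : ℕ) : ∃ C : ℝ, 0 < C ∧ ∀ R : ℝ, 0 < R →
    ∑' k : Fin n → ℤ, (if zbr k ≤ R then (1 : ℝ≥0∞) else 0) ≤ ENNReal.ofReal (C * R ^ (n : ℝ)) := by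
  refine ⟨3 ^ n, by positivity, fun R hR => ?_⟩
  rcases lt_or_ge R 1 with h | h
  · have : ∀ k : Fin n → ℤ, (if zbr k ≤ R then (1 : ℝ≥0∞) else 0) = 0 := fun k => by
      rw [if_neg]; have := zbr_one_le k; linarith
    simp [this]
  set m : ℤ := ⌊R⌋ with hm
  have hm0 : 0 ≤ m := Int.floor_nonneg.mpr hR.le
  let s : Finset (Fin n → ℤ) := Fintype.piFinset fun _ => Finset.Icc (-m) m
  have hs : ∀ k ∉ s, (if zbr k ≤ R then (1 : ℝ≥0∞) else 0) = 0 := by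
    intro k hk
    rw [if_neg]
    intro hkR
    apply hk
    rw [Fintype.mem_piFinset]
    intro i
    have := (abs_le_zbr k i).trans hkR
    rw [abs_le] at this
    rw [Finset.mem_Icc]
    constructor
    · have : -(k i) ≤ m := Int.le_floor.mpr (by push_cast; linarith)
      linarith
    · exact Int.le_floor.mpr this.2
  rw [tsum_eq_sum hs]
  calc ∑ k ∈ s, (if zbr k ≤ R then (1 : ℝ≥0∞) else 0) ≤ ∑ k ∈ s, 1 :=
        Finset.sum_le_sum fun k _ => by split_ifs <;> simp
    _ = ENNReal.ofReal ((s.card : ℝ)) := by simp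
    _ ≤ _ := by
      apply ENNReal.ofReal_le_ofReal
      rw [Fintype.card_piFinset]
      simp only [Int.card_Icc, Finset.prod_const, Finset.card_univ, Fintype.card_fin]
      rw [Real.rpow_natCast, ← mul_pow]
      push_cast
      apply pow_le_pow_left₀ (by positivity)
      have h1 : (((m + 1 - -m).toNat : ℤ) : ℝ) = ((m + 1 - -m : ℤ) : ℝ) := by
        rw [Int.toNat_of_nonneg (by linarith)]
      rw [Int.cast_natCast] at h1
      rw [h1]
      have : (m : ℝ) ≤ R := Int.floor_le R
      push_cast
      linarith

/-- The annulus `R ≤ ⟨k⟩ ≤ L R` holds at least `Rⁿ` points. -/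
theorem ann_count (n : ℕ) (hn : 1 ≤ n) : ∃ L : ℝ, 1 ≤ L ∧ ∀ R : ℝ, 1 ≤ R →
    ENNReal.ofReal (R ^ (n : ℝ)) ≤
      ∑' k : Fin n → ℤ, (if R ≤ zbr k ∧ zbr k ≤ L * R then (1 : ℝ≥0∞) else 0) := by
  refine ⟨4 * (n + 1), by norm_cast; omega, fun R hR => ?_⟩
  set m : ℤ := ⌈R⌉ with hm
  have hm0 : R ≤ m := Int.le_ceil R
  have hm1 : (m : ℝ) ≤ 2 * R := by have := Int.ceil_lt_add_one R; rw [← hm] at this; linarith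
  have hm2 : 0 ≤ m := by have : (0 : ℝ) ≤ m := by linarith
                         exact_mod_cast this
  let s : Finset (Fin n → ℤ) := Fintype.piFinset fun _ => Finset.Ico m (2 * m)
  have hs : ∀ k ∈ s, (if R ≤ zbr k ∧ zbr k ≤ 4 * (n + 1) * R then (1 : ℝ≥0∞) else 0) = 1 := by
    intro k hk
    rw [Fintype.mem_piFinset] at hk
    have hk1 : ∀ i, (m : ℝ) ≤ k i ∧ (k i : ℝ) ≤ 2 * m := fun i => by
      have := Finset.mem_Ico.mp (hk i)
      exact ⟨by exact_mod_cast this.1, by exact_mod_cast this.2.le⟩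
    rw [if_pos]
    constructor
    · have h1 := hk1 ⟨0, hn⟩
      have h2 := abs_le_zbr k ⟨0, hn⟩
      have h3 := le_abs_self (k ⟨0, hn⟩ : ℝ)
      linarith
    · refine le_of_sq_le_sq ?_ (by positivity)
      rw [zbr_sq]
      have h1 : ∑ i, (k i : ℝ) ^ 2 ≤ ∑ _i : Fin n, (4 * R) ^ 2 := by
        refine Finset.sum_le_sum fun i _ => ?_
        have := hk1 i
        apply pow_le_pow_left₀ <;> linarith
      simp only [Finset.sum_const, Finset.card_univ, Fintype.card_fin, nsmul_eq_mul] at h1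
      have hn' : (1 : ℝ) ≤ n := by exact_mod_cast hn
      have h5 : 1 ≤ R ^ 2 := by nlinarith
      have h6 : 0 ≤ (n : ℝ) ^ 2 * R ^ 2 := by positivity
      nlinarith
  calc ENNReal.ofReal (R ^ (n : ℝ)) ≤ ENNReal.ofReal ((s.card : ℝ)) := by
        apply ENNReal.ofReal_le_ofReal
        rw [Fintype.card_piFinset]
        simp only [Int.card_Ico, Finset.prod_const, Finset.card_univ, Fintype.card_fin]
        rw [Real.rpow_natCast]
        push_cast
        apply pow_le_pow_left₀ (by linarith)
        have h1 : (((2 * m - m).toNat : ℤ) : ℝ) = ((2 * m - m : ℤ) : ℝ) := by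
          rw [Int.toNat_of_nonneg (by linarith)]
        rw [Int.cast_natCast] at h1
        rw [h1]
        push_cast
        linarith
    _ = ∑ k ∈ s, (1 : ℝ≥0∞) := by simp
    _ = ∑ k ∈ s, (if R ≤ zbr k ∧ zbr k ≤ 4 * (n + 1) * R then (1 : ℝ≥0∞) else 0) :=
        Finset.sum_congr rfl fun k hk => (hs k hk).symm
    _ ≤ _ := ENNReal.sum_le_tsum s

/-! ### Power sums over balls, shells and tails -/

/-- One shell `R ≤ ⟨k⟩ ≤ Q R` contributes at most a multiple of `R^{n+e}` to `∑ ⟨k⟩^e`. -/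
theorem shell_le (n : ℕ) (e Q : ℝ) (hQ : 1 ≤ Q) : ∃ C : ℝ, 0 < C ∧ ∀ R : ℝ, 0 < R →
    ∑' k : Fin n → ℤ, (if R ≤ zbr k ∧ zbr k ≤ Q * R then ENNReal.ofReal (zbr k ^ e) else 0)
      ≤ ENNReal.ofReal (C * R ^ (n + e)) := by
  obtain ⟨C, hC, h⟩ := count_le n
  have hQ0 : 0 < Q := by linarith
  refine ⟨Q ^ |e| * (C * Q ^ (n : ℝ)), by positivity, fun R hR => ?_⟩
  calc ∑' k : Fin n → ℤ, (if R ≤ zbr k ∧ zbr k ≤ Q * R then ENNReal.ofReal (zbr k ^ e) else 0)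
      ≤ ∑' k : Fin n → ℤ, ENNReal.ofReal (Q ^ |e| * R ^ e) *
          (if zbr k ≤ Q * R then (1 : ℝ≥0∞) else 0) := by
        refine ENNReal.tsum_le_tsum fun k => ?_
        split_ifs with h1 h2 h2
        · rw [mul_one]
          refine ENNReal.ofReal_le_ofReal (rpow_compare hR hQ ?_ h1.2 e)
          nlinarith [h1.1, zbr_pos k]
        · exact absurd h1.2 h2
        · exact zero_le
        · exact zero_le
    _ ≤ ENNReal.ofReal (Q ^ |e| * R ^ e) * ENNReal.ofReal (C * (Q * R) ^ (n : ℝ)) := by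
        rw [ENNReal.tsum_mul_left]
        gcongr
        exact h _ (by positivity)
    _ = _ := by
        rw [← ENNReal.ofReal_mul (by positivity), Real.mul_rpow hQ0.le hR.le, Real.rpow_add hR]
        congr 1; ring

/-- Partial sums of `⟨k⟩^{-c}` over balls, for a non-summable exponent `c < n`. -/
theorem sum_ball_le (n : ℕ) (c : ℝ) (hc : c < n) : ∃ C : ℝ, 0 < C ∧ ∀ R : ℝ, 0 < R →
    ∑' k : Fin n → ℤ, (if zbr k ≤ R then ENNReal.ofReal (zbr k ^ (-c)) else 0)
      ≤ ENNReal.ofReal (C * R ^ (n - c)) := by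
  obtain ⟨C, hC, h⟩ := shell_le n (-c) 2 (by norm_num)
  set r : ℝ := (1 / 2) ^ (n - c) with hr
  have hr0 : 0 < r := by positivity
  have hr1 : r < 1 := Real.rpow_lt_one (by norm_num) (by norm_num) (by linarith)
  have h1r : 0 < 1 - r := by linarith
  refine ⟨C * r / (1 - r), by positivity, ?_⟩
  -- Halving the radius costs one shell; the constant is the fixed point of `x ↦ (x + C) r`.
  have key : ∀ i : ℕ, ∀ R : ℝ, 0 < R → R < 2 ^ i →
      ∑' k : Fin n → ℤ, (if zbr k ≤ R then ENNReal.ofReal (zbr k ^ (-c)) else 0)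
        ≤ ENNReal.ofReal (C * r / (1 - r) * R ^ (n - c)) := by
    intro i
    induction i with
    | zero =>
      intro R hR hR1
      have : ∀ k : Fin n → ℤ,
          (if zbr k ≤ R then ENNReal.ofReal (zbr k ^ (-c)) else 0) = 0 := fun k => by
        rw [if_neg]
        have := zbr_one_le k
        rw [pow_zero] at hR1
        linarith
      rw [ENNReal.tsum_eq_zero.mpr this]
      exact zero_le
    | succ i ih =>
      intro R hR hR1
      calc _ ≤ ∑' k : Fin n → ℤ,
            ((if zbr k ≤ R / 2 then ENNReal.ofReal (zbr k ^ (-c)) else 0) +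
            (if R / 2 ≤ zbr k ∧ zbr k ≤ 2 * (R / 2)
              then ENNReal.ofReal (zbr k ^ (-c)) else 0)) := by
            refine ENNReal.tsum_le_tsum fun k => ?_
            rcases le_total (zbr k) (R / 2) with h1 | h1
            · rw [if_pos h1, if_pos (by linarith)]
              exact le_self_add
            · by_cases h2 : zbr k ≤ R
              · rw [if_pos h2, if_pos (⟨h1, by linarith⟩ : R / 2 ≤ zbr k ∧ zbr k ≤ 2 * (R / 2))]
                exact le_add_self
              · rw [if_neg h2]; exact zero_le
        _ ≤ ENNReal.ofReal (C * r / (1 - r) * (R / 2) ^ (n - c)) +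
            ENNReal.ofReal (C * (R / 2) ^ (n + -c)) := by
            rw [ENNReal.tsum_add]
            gcongr
            · exact ih _ (by positivity) (by rw [pow_succ] at hR1; linarith)
            · exact h _ (by positivity)
        _ = _ := by
            rw [← ENNReal.ofReal_add (by positivity) (by positivity)]
            congr 1
            have : (R / 2) ^ (n - c) = r * R ^ (n - c) := by
              rw [hr, ← Real.mul_rpow (by norm_num) hR.le]
              congr 1; ring
            rw [← sub_eq_add_neg, this]
            field_simp
            ring
  intro R hR
  obtain ⟨i, hi⟩ := pow_unbounded_of_one_lt R (by norm_num : (1 : ℝ) < 2)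
  exact key i R hR hi

/-- Tails of `∑ ⟨k⟩^{-d}` for a summable exponent `d > n`. -/
theorem sum_tail_le (n : ℕ) (d : ℝ) (hd : n < d) : ∃ C : ℝ, 0 < C ∧ ∀ R : ℝ, 0 < R →
    ∑' k : Fin n → ℤ, (if R ≤ zbr k then ENNReal.ofReal (zbr k ^ (-d)) else 0)
      ≤ ENNReal.ofReal (C * R ^ (n - d)) := by
  obtain ⟨C, hC, h⟩ := shell_le n (-d) 2 (by norm_num)
  set r : ℝ := 2 ^ (n - d) with hr
  have hr0 : 0 < r := by positivity
  have hr1 : r < 1 := Real.rpow_lt_one_of_one_lt_of_neg (by norm_num) (by linarith)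
  have h1r : 0 < 1 - r := by linarith
  refine ⟨C / (1 - r), by positivity, ?_⟩
  have key : ∀ i : ℕ, ∀ R : ℝ, 0 < R →
      ∑' k : Fin n → ℤ,
        (if R ≤ zbr k ∧ zbr k < 2 ^ i * R then ENNReal.ofReal (zbr k ^ (-d)) else 0)
        ≤ ENNReal.ofReal (C / (1 - r) * R ^ (n - d)) := by
    intro i
    induction i with
    | zero =>
      intro R hR
      have : ∀ k : Fin n → ℤ, (if R ≤ zbr k ∧ zbr k < 2 ^ 0 * R
          then ENNReal.ofReal (zbr k ^ (-d)) else 0) = 0 := fun k => by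
        rw [if_neg]
        rintro ⟨h1, h2⟩
        linarith
      rw [ENNReal.tsum_eq_zero.mpr this]
      exact zero_le
    | succ i ih =>
      intro R hR
      calc _ ≤ ∑' k : Fin n → ℤ,
            ((if R ≤ zbr k ∧ zbr k ≤ 2 * R then ENNReal.ofReal (zbr k ^ (-d)) else 0) +
            (if 2 * R ≤ zbr k ∧ zbr k < 2 ^ i * (2 * R)
              then ENNReal.ofReal (zbr k ^ (-d)) else 0)) := by
            refine ENNReal.tsum_le_tsum fun k => ?_
            split_ifs with h1 h2 h3 h3 h2 h3 h3 <;> simp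
            rcases le_total (zbr k) (2 * R) with h4 | h4
            · exact absurd ⟨h1.1, h4⟩ h2
            · refine absurd ⟨h4, ?_⟩ h3
              have := h1.2
              rw [pow_succ] at this
              linarith
        _ ≤ ENNReal.ofReal (C * R ^ (n + -d)) +
            ENNReal.ofReal (C / (1 - r) * (2 * R) ^ (n - d)) := by
            rw [ENNReal.tsum_add]
            gcongr
            · exact h _ hR
            · exact ih _ (by positivity)
        _ = _ := by
            rw [← ENNReal.ofReal_add (by positivity) (by positivity)]
            congr 1
            have : (2 * R) ^ (n - d) = r * R ^ (n - d) := by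
              rw [hr, ← Real.mul_rpow (by norm_num) hR.le]
            rw [← sub_eq_add_neg, this]
            field_simp
            ring
  intro R hR
  rw [ENNReal.tsum_eq_iSup_sum]
  refine iSup_le fun s => ?_
  obtain ⟨i, hi⟩ := pow_unbounded_of_one_lt ((∑ k ∈ s, zbr k) / R) (by norm_num : (1 : ℝ) < 2)
  refine le_trans ?_ (key i R hR)
  refine le_trans (Finset.sum_le_sum fun k hk => ?_) (ENNReal.sum_le_tsum s)
  split_ifs with h1 h2
  · exact le_rfl
  · refine absurd ⟨h1, ?_⟩ h2
    rw [div_lt_iff₀ hR] at hi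
    exact lt_of_le_of_lt (Finset.single_le_sum (fun j _ => (zbr_pos j).le) hk) hi
  · exact zero_le
  · exact zero_le

theorem sum_all_le (n : ℕ) (d : ℝ) (hd : n < d) : ∃ C : ℝ, 0 < C ∧
    ∑' k : Fin n → ℤ, ENNReal.ofReal (zbr k ^ (-d)) ≤ ENNReal.ofReal C := by
  obtain ⟨C, hC, h⟩ := sum_tail_le n d hd
  refine ⟨C, hC, ?_⟩
  have := h 1 one_pos
  simpa [zbr_one_le] using this

/-- The critical sequence `⟨k⟩^{-n}`, truncated to `2 ≤ ⟨k⟩ < 2 Q^N`. -/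
noncomputable def critSeq (n : ℕ) (Q : ℝ) (N : ℕ) (k : Fin n → ℤ) : ℝ≥0∞ :=
  if 2 ≤ zbr k ∧ zbr k < 2 * Q ^ N then ENNReal.ofReal (zbr k ^ (-(n : ℝ))) else 0

/-- The mass of the critical sequence grows like `N`, the logarithm of the truncation radius. -/
theorem critSeq_mass (n : ℕ) (hn : 1 ≤ n) : ∃ L Q c C : ℝ, 1 ≤ L ∧ Q = 2 * L ∧ 0 < c ∧ 0 < C ∧
    (∀ R : ℝ, 1 ≤ R → ENNReal.ofReal (R ^ (n : ℝ)) ≤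
      ∑' k : Fin n → ℤ, (if R ≤ zbr k ∧ zbr k ≤ L * R then (1 : ℝ≥0∞) else 0)) ∧
    (∀ N : ℕ, ENNReal.ofReal (c * N) ≤ ∑' k, critSeq n Q N k) ∧
    (∀ N : ℕ, ∑' k, critSeq n Q N k ≤ ENNReal.ofReal (C * N)) := by
  obtain ⟨L, hL, h⟩ := ann_count n hn
  have hL0 : 0 < L := by linarith
  obtain ⟨C, hC, h'⟩ := shell_le n (-(n : ℝ)) (2 * L) (by linarith)
  refine ⟨L, 2 * L, L ^ (-(n : ℝ)), C, hL, rfl, by positivity, hC, h, ?_, ?_⟩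
  · intro N
    induction N with
    | zero => simp
    | succ N ih =>
      set R : ℝ := 2 * (2 * L) ^ N with hR
      have hp : 1 ≤ (2 * L) ^ N := one_le_pow₀ (by linarith)
      have hR1 : 1 ≤ R := by linarith
      have hR0 : 0 < R := by linarith
      calc ENNReal.ofReal (L ^ (-(n : ℝ)) * (N + 1 : ℕ))
          = ENNReal.ofReal (L ^ (-(n : ℝ)) * N) +
            ENNReal.ofReal ((L * R) ^ (-(n : ℝ))) * ENNReal.ofReal (R ^ (n : ℝ)) := by
            rw [← ENNReal.ofReal_mul (by positivity),
              ← ENNReal.ofReal_add (by positivity) (by positivity)]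
            congr 1
            rw [Real.mul_rpow hL0.le hR0.le, mul_assoc, ← Real.rpow_add hR0]
            simp
            ring
        _ ≤ ∑' k, critSeq n (2 * L) N k + ∑' k : Fin n → ℤ,
            ENNReal.ofReal ((L * R) ^ (-(n : ℝ))) *
              (if R ≤ zbr k ∧ zbr k ≤ L * R then (1 : ℝ≥0∞) else 0) := by
            rw [ENNReal.tsum_mul_left]
            gcongr
            exact h R hR1
        _ ≤ _ := by
            rw [← ENNReal.tsum_add]
            refine ENNReal.tsum_le_tsum fun k => ?_
            have hz := zbr_pos k
            have e1 : 2 * (2 * L) ^ (N + 1) = 2 * L * R := by rw [hR]; ring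
            unfold critSeq
            rw [e1, ← hR]
            by_cases h1 : R ≤ zbr k ∧ zbr k ≤ L * R
            · rw [if_neg (fun h => absurd h.2 (not_lt.mpr h1.1)), if_pos h1, if_pos]
              · rw [zero_add, mul_one]
                exact ENNReal.ofReal_le_ofReal
                  (Real.rpow_le_rpow_of_nonpos hz h1.2 (by simp))
              · refine ⟨by linarith, ?_⟩
                have : 0 < L * R := by positivity
                linarith
            · rw [if_neg h1, mul_zero, add_zero]
              by_cases h2 : 2 ≤ zbr k ∧ zbr k < R
              · rw [if_pos h2, if_pos]
                refine ⟨h2.1, h2.2.trans_le ?_⟩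
                nlinarith
              · rw [if_neg h2]; exact zero_le
  · intro N
    induction N with
    | zero =>
      have : ∀ k, critSeq n (2 * L) 0 k = 0 := fun k => by
        unfold critSeq
        rw [if_neg]
        rintro ⟨h1, h2⟩
        linarith
      rw [ENNReal.tsum_eq_zero.mpr this]
      exact zero_le
    | succ N ih =>
      set R : ℝ := 2 * (2 * L) ^ N with hR
      have hp : 1 ≤ (2 * L) ^ N := one_le_pow₀ (by linarith)
      have hR1 : 1 ≤ R := by linarith
      have hR0 : 0 < R := by linarith
      calc _ ≤ ∑' k, critSeq n (2 * L) N k + ∑' k : Fin n → ℤ,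
            (if R ≤ zbr k ∧ zbr k ≤ (2 * L) * R
              then ENNReal.ofReal (zbr k ^ (-(n : ℝ))) else 0) := by
            rw [← ENNReal.tsum_add]
            refine ENNReal.tsum_le_tsum fun k => ?_
            have e1 : 2 * (2 * L) ^ (N + 1) = 2 * L * R := by rw [hR]; ring
            unfold critSeq
            rw [e1, ← hR]
            split_ifs with h1 h2 h3 h3 h2 h3 h3 <;> simp
            rcases lt_or_ge (zbr k) R with h4 | h4
            · exact absurd ⟨h1.1, h4⟩ h2
            · exact absurd ⟨h4, h1.2.le⟩ h3
        _ ≤ ENNReal.ofReal (C * N) + ENNReal.ofReal (C * R ^ (n + -(n : ℝ))) := by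
            gcongr
            exact h' R hR0
        _ = _ := by
            rw [← ENNReal.ofReal_add (by positivity) (by positivity)]
            congr 1
            simp
            ring

/-! ### Duality and the Schur test -/

/-- The unweighted `ℓ^q` norm of a nonnegative family. -/
noncomputable def nrm {ι : Type*} (q : ℝ≥0∞) (g : ι → ℝ≥0∞) : ℝ≥0∞ :=
  if q = ∞ then ⨆ k, g k else (∑' k, g k ^ q.toReal) ^ (1 / q.toReal)

/-- Boundedness of the bilinear form of the kernel `K` on `ℓ^p × ℓ^{q'}`, with `x = 1 - 1/p` and
`y = 1/q`.  The two balls are parametrized by `f^{1/p}` and `h^{1/q'}` with `f`, `h` in the unit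
ball of `ℓ¹`, which treats all exponents in `[1,∞]` alike. -/
def BilBdd {ι : Type*} (K : ι → ι → ℝ≥0∞) (x y : ℝ) : Prop :=
  ∃ M : ℝ≥0, ∀ f h : ι → ℝ≥0∞, ∑' j, f j ≤ 1 → ∑' k, h k ≤ 1 →
    ∑' k, ∑' j, K k j * f j ^ (1 - x) * h k ^ (1 - y) ≤ M

theorem iv_eq (q : ℝ≥0∞) : iv q = (q.toReal)⁻¹ := ENNReal.toReal_inv q

theorem iv_top : iv ∞ = 0 := by simp [iv]

theorem toReal_ge_one {q : ℝ≥0∞} (hq : 1 ≤ q) (h : q ≠ ∞) : 1 ≤ q.toReal := by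
  rw [← ENNReal.toReal_one]
  exact (ENNReal.toReal_le_toReal (by simp) h).mpr hq

theorem iv_nonneg (q : ℝ≥0∞) : 0 ≤ iv q := ENNReal.toReal_nonneg

theorem iv_le_one {q : ℝ≥0∞} (hq : 1 ≤ q) : iv q ≤ 1 := by
  by_cases h : q = ∞
  · simp [h, iv_top]
  · rw [iv_eq]
    exact inv_le_one_of_one_le₀ (toReal_ge_one hq h)

theorem iv_eq_zero {q : ℝ≥0∞} (hq : 1 ≤ q) : iv q = 0 ↔ q = ∞ := by
  constructor
  · intro h
    by_contra h'
    rw [iv_eq, inv_eq_zero] at h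
    have := toReal_ge_one hq h'
    linarith
  · rintro rfl; exact iv_top

theorem iv_eq_one {q : ℝ≥0∞} : iv q = 1 ↔ q = 1 := by
  rw [iv_eq, inv_eq_one, ENNReal.toReal_eq_one_iff]

section abstract_kernels

variable {ι : Type*}

theorem nrm_mono (q : ℝ≥0∞) {g g' : ι → ℝ≥0∞} (h : ∀ k, g k ≤ g' k) : nrm q g ≤ nrm q g' := by
  unfold nrm
  split_ifs
  · exact iSup_mono h
  · gcongr
    exact h _

theorem nrm_smul {q : ℝ≥0∞} (hq : 1 ≤ q) (c : ℝ≥0∞) (g : ι → ℝ≥0∞) :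
    nrm q (fun k => c * g k) = c * nrm q g := by
  unfold nrm
  split_ifs with h
  · rw [ENNReal.mul_iSup]
  · have hq' := toReal_ge_one hq h
    simp_rw [ENNReal.mul_rpow_of_nonneg _ _ (by linarith : 0 ≤ q.toReal)]
    rw [ENNReal.tsum_mul_left, ENNReal.mul_rpow_of_nonneg _ _ (by positivity), ← ENNReal.rpow_mul]
    rw [mul_one_div_cancel (by linarith), ENNReal.rpow_one]

theorem nrm_eq_zero {q : ℝ≥0∞} (hq : 1 ≤ q) {g : ι → ℝ≥0∞} (h : nrm q g = 0) : ∀ k, g k = 0 := by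
  unfold nrm at h
  split_ifs at h with h'
  · simpa using h
  · have hq' := toReal_ge_one hq h'
    rw [ENNReal.rpow_eq_zero_iff_of_pos (by positivity), ENNReal.tsum_eq_zero] at h
    intro k
    have := h k
    rwa [ENNReal.rpow_eq_zero_iff_of_pos (by positivity)] at this

theorem nrm_zero {q : ℝ≥0∞} (hq : 1 ≤ q) : nrm q (fun _ : ι => 0) = 0 := by
  have := nrm_smul hq 0 (fun _ : ι => 0)
  simpa using this

theorem nrm_rpow_le {p : ℝ≥0∞} (hp : 1 ≤ p) (f : ι → ℝ≥0∞) :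
    nrm p (fun j => f j ^ iv p) ≤ (∑' j, f j) ^ iv p := by
  unfold nrm
  split_ifs with h
  · subst h
    simp [iv_top]
  · have hp' := toReal_ge_one hp h
    simp_rw [← ENNReal.rpow_mul, iv_eq, inv_mul_cancel₀ (by linarith : p.toReal ≠ 0),
      ENNReal.rpow_one, one_div]
    exact le_rfl

theorem holder_nrm {q : ℝ≥0∞} (hq : 1 ≤ q) (g h : ι → ℝ≥0∞) :
    ∑' k, g k * h k ^ (1 - iv q) ≤ nrm q g * (∑' k, h k) ^ (1 - iv q) := by
  unfold nrm
  split_ifs with hqt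
  · subst hqt
    simp only [iv_top, sub_zero, ENNReal.rpow_one]
    rw [← ENNReal.tsum_mul_left]
    refine ENNReal.tsum_le_tsum fun k => ?_
    gcongr
    exact le_iSup g k
  · have hq' := toReal_ge_one hq hqt
    rcases eq_or_lt_of_le hq' with h1 | h1
    · simp [iv_eq, ← h1]
    · have hc := Real.HolderConjugate.conjExponent h1
      set r := q.toReal.conjExponent with hr
      have e1 : 1 - iv q = 1 / r := by
        have := hc.inv_add_inv_eq_one
        rw [iv_eq, one_div]
        linarith
      rw [e1, ENNReal.tsum_eq_iSup_sum]
      refine iSup_le fun s => ?_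
      refine (ENNReal.inner_le_Lp_mul_Lq s g (fun k => h k ^ (1 / r)) hc).trans ?_
      have hr0 : 0 < r := hc.symm.pos
      simp_rw [← ENNReal.rpow_mul, one_div_mul_cancel hr0.ne', ENNReal.rpow_one]
      gcongr
      · exact ENNReal.sum_le_tsum s
      · exact ENNReal.sum_le_tsum s

/-- A bounded operator has a bounded bilinear form, in homogeneous form. -/
theorem bil_of_op {p q : ℝ≥0∞} (hp : 1 ≤ p) (hq : 1 ≤ q) (K : ι → ι → ℝ≥0∞) (C : ℝ≥0∞)
    (H : ∀ b : ι → ℝ≥0∞, nrm q (fun k => ∑' j, K k j * b j) ≤ C * nrm p b) (f h : ι → ℝ≥0∞) :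
    ∑' k, ∑' j, K k j * f j ^ iv p * h k ^ (1 - iv q)
      ≤ C * (∑' j, f j) ^ iv p * (∑' k, h k) ^ (1 - iv q) := by
  simp_rw [ENNReal.tsum_mul_right]
  refine (holder_nrm hq _ h).trans ?_
  gcongr
  refine (H _).trans ?_
  gcongr
  exact nrm_rpow_le hp f

/-- A sequence of norm `N ∈ (0,∞)` in `ℓ^p` is dominated by `N f^{1/p}` with `f` in the unit ball
of `ℓ¹`. -/
theorem exists_l1 {p : ℝ≥0∞} (hp : 1 ≤ p) (b : ι → ℝ≥0∞) (h0 : nrm p b ≠ 0) (ht : nrm p b ≠ ∞) :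
    ∃ f : ι → ℝ≥0∞, ∑' j, f j ≤ 1 ∧ ∀ j, b j ≤ nrm p b * f j ^ iv p := by
  by_cases h : p = ∞
  · subst h
    refine ⟨fun _ => 0, by simp, fun j => ?_⟩
    simp only [iv_top, ENNReal.rpow_zero, mul_one]
    simp only [nrm, if_true]
    exact le_iSup b j
  · have hp' := toReal_ge_one hp h
    have hp0 : 0 < p.toReal := by linarith
    set N := nrm p b with hN
    refine ⟨fun j => (b j / N) ^ p.toReal, ?_, fun j => ?_⟩
    · simp_rw [ENNReal.div_rpow_of_nonneg _ _ hp0.le, div_eq_mul_inv]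
      rw [ENNReal.tsum_mul_right]
      have : N ^ p.toReal = ∑' j, b j ^ p.toReal := by
        rw [hN, nrm, if_neg h, ← ENNReal.rpow_mul, one_div_mul_cancel hp0.ne', ENNReal.rpow_one]
      rw [← this]
      exact ENNReal.mul_inv_le_one _
    · rw [← ENNReal.rpow_mul, iv_eq, mul_inv_cancel₀ hp0.ne', ENNReal.rpow_one,
        ENNReal.mul_div_cancel h0 ht]

/-- The converse of Hölder's inequality. -/
theorem nrm_le_of_dual {q : ℝ≥0∞} (hq : 1 ≤ q) (G : ι → ℝ≥0∞) (M : ℝ≥0)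
    (H : ∀ h : ι → ℝ≥0∞, ∑' k, h k ≤ 1 → ∑' k, G k * h k ^ (1 - iv q) ≤ M) : nrm q G ≤ M := by
  classical
  have hpt : ∀ k, G k ≤ M := by
    intro k
    have h1 := H (Pi.single k 1) (by rw [tsum_pi_single])
    refine le_trans ?_ ((ENNReal.le_tsum k).trans h1)
    simp
  unfold nrm
  split_ifs with hqt
  · exact iSup_le hpt
  · have hq' := toReal_ge_one hq hqt
    have hq0 : 0 < q.toReal := by linarith
    rw [one_div, ENNReal.rpow_inv_le_iff hq0, ENNReal.tsum_eq_iSup_sum]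
    refine iSup_le fun s => ?_
    set S := ∑ k ∈ s, G k ^ q.toReal with hS
    rcases eq_or_ne S 0 with h0 | h0
    · rw [h0]; exact zero_le
    have ht : S ≠ ∞ := by
      rw [hS]
      refine (ENNReal.sum_lt_top.mpr fun k _ => ?_).ne
      exact ENNReal.rpow_lt_top_of_nonneg hq0.le ((hpt k).trans_lt ENNReal.coe_lt_top).ne
    have hiv : 0 ≤ 1 - iv q := by have := iv_le_one hq; linarith
    -- The extremal `h` in Hölder's inequality.
    have h1 := H (fun k => if k ∈ s then G k ^ q.toReal / S else 0) (by
      rw [tsum_eq_sum (s := s) (by intro k hk; simp [hk])]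
      rw [Finset.sum_congr rfl (fun k hk => if_pos hk)]
      simp_rw [div_eq_mul_inv]
      rw [← Finset.sum_mul, ← hS]
      exact ENNReal.mul_inv_le_one _)
    have h2 : S ^ iv q ≤ M := by
      refine le_trans ?_ ((ENNReal.sum_le_tsum s).trans h1)
      have e : ∀ k ∈ s, G k * (if k ∈ s then G k ^ q.toReal / S else 0) ^ (1 - iv q)
          = G k ^ q.toReal * (S ^ (1 - iv q))⁻¹ := by
        intro k hk
        rw [if_pos hk, ENNReal.div_rpow_of_nonneg _ _ hiv, ← ENNReal.rpow_mul, div_eq_mul_inv,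
          ← mul_assoc]
        congr 1
        have e2 : q.toReal * (1 - iv q) = q.toReal - 1 := by
          rw [iv_eq]; field_simp
        rw [e2]
        nth_rewrite 1 [← ENNReal.rpow_one (G k)]
        rw [← ENNReal.rpow_add_of_nonneg _ _ (by norm_num) (by linarith)]
        congr 1; ring
      rw [Finset.sum_congr rfl e, ← Finset.sum_mul, ← hS, ← ENNReal.rpow_neg]
      nth_rewrite 2 [← ENNReal.rpow_one S]
      rw [← ENNReal.rpow_add _ _ h0 ht]
      apply le_of_eq
      congr 1; ring
    rw [iv_eq, ENNReal.rpow_inv_le_iff hq0] at h2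
    exact h2

/-- A bounded bilinear form gives a bounded operator, by the converse of Hölder's inequality. -/
theorem op_of_bil {p q : ℝ≥0∞} (hp : 1 ≤ p) (hq : 1 ≤ q) (K : ι → ι → ℝ≥0∞)
    (H : BilBdd K (1 - iv p) (iv q)) :
    ∃ C : ℝ≥0, ∀ b : ι → ℝ≥0∞, nrm q (fun k => ∑' j, K k j * b j) ≤ C * nrm p b := by
  obtain ⟨M, hM⟩ := H
  rw [sub_sub_cancel] at hM
  refine ⟨M + 1, fun b => ?_⟩
  by_cases h0 : nrm p b = 0
  · simp [nrm_eq_zero hp h0, nrm_zero hq]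
  by_cases ht : nrm p b = ∞
  · rw [ht, ENNReal.mul_top]
    · exact le_top
    · simp
  obtain ⟨f, hf, hb⟩ := exists_l1 hp b h0 ht
  calc nrm q (fun k => ∑' j, K k j * b j)
      ≤ nrm q (fun k => nrm p b * ∑' j, K k j * f j ^ iv p) := by
        refine nrm_mono q fun k => ?_
        rw [← ENNReal.tsum_mul_left]
        refine ENNReal.tsum_le_tsum fun j => ?_
        calc K k j * b j ≤ K k j * (nrm p b * f j ^ iv p) := by gcongr; exact hb j
          _ = _ := by ring
    _ = nrm p b * nrm q (fun k => ∑' j, K k j * f j ^ iv p) := nrm_smul hq _ _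
    _ ≤ nrm p b * (M : ℝ≥0∞) := by
        gcongr
        refine nrm_le_of_dual hq _ M fun h hh => ?_
        have := hM f h hf hh
        simpa only [ENNReal.tsum_mul_right] using this
    _ ≤ _ := by
        rw [mul_comm]
        gcongr
        simp

theorem BilBdd.transpose {K : ι → ι → ℝ≥0∞} {x y : ℝ} (H : BilBdd K x y) :
    BilBdd (fun k j => K j k) y x := by
  obtain ⟨M, hM⟩ := H
  refine ⟨M, fun f h hf hh => ?_⟩
  refine le_trans (le_of_eq ?_) (hM h f hh hf)
  rw [ENNReal.tsum_comm]
  refine tsum_congr fun j => tsum_congr fun k => ?_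
  ring

theorem BilBdd.mono {K K' : ι → ι → ℝ≥0∞} {x y : ℝ} (H : BilBdd K' x y) (c : ℝ)
    (h : ∀ k j, K k j ≤ ENNReal.ofReal c * K' k j) : BilBdd K x y := by
  obtain ⟨M, hM⟩ := H
  refine ⟨c.toNNReal * M, fun f h' hf hh => ?_⟩
  calc _ ≤ ∑' k, ∑' j, ENNReal.ofReal c * (K' k j * f j ^ (1 - x) * h' k ^ (1 - y)) := by
        refine ENNReal.tsum_le_tsum fun k => ENNReal.tsum_le_tsum fun j => ?_
        calc _ ≤ (ENNReal.ofReal c * K' k j) * f j ^ (1 - x) * h' k ^ (1 - y) := by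
              gcongr; exact h k j
          _ = _ := by ring
    _ ≤ _ := by
        simp_rw [ENNReal.tsum_mul_left]
        rw [ENNReal.coe_mul]
        exact mul_le_mul' le_rfl (hM f h' hf hh)

theorem BilBdd.add {K K' : ι → ι → ℝ≥0∞} {x y : ℝ} (H : BilBdd K x y) (H' : BilBdd K' x y) :
    BilBdd (fun k j => K k j + K' k j) x y := by
  obtain ⟨M, hM⟩ := H
  obtain ⟨M', hM'⟩ := H'
  refine ⟨M + M', fun f h hf hh => ?_⟩
  simp_rw [add_mul, ENNReal.tsum_add]
  rw [ENNReal.coe_add]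
  exact add_le_add (hM f h hf hh) (hM' f h hf hh)

/-- A weighted geometric mean is at most the sum of its entries. -/
theorem geom_le_add {x y z : ℝ} (hx : 0 ≤ x) (hy : 0 ≤ y) (hz : 0 ≤ z) (h : x + y + z = 1)
    (a b c : ℝ≥0∞) : a ^ x * b ^ y * c ^ z ≤ a + b + c := by
  set m := a + b + c with hm
  have ha : a ≤ m := by rw [hm, add_assoc]; exact le_self_add
  have hb : b ≤ m := by rw [hm, add_assoc]; exact le_add_left le_self_add
  have hc : c ≤ m := by rw [hm]; exact le_add_self
  calc a ^ x * b ^ y * c ^ z ≤ m ^ x * m ^ y * m ^ z := by gcongr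
    _ = m := by
      rw [← ENNReal.rpow_add_of_nonneg _ _ hx hy,
        ← ENNReal.rpow_add_of_nonneg _ _ (by positivity) hz, h, ENNReal.rpow_one]

/-- A Schur test that covers Hölder's inequality, Minkowski's inequality, Young's inequality and
the classical Schur test: the weight `w₁` has bounded row sums and `w₂` has bounded column sums.
Distributing `f^{1-x} h^{1-y} w₁^x w₂^y = (w₁ h)^x (w₂ f)^y (f h)^{1-x-y}` gives three terms that
sum separately. -/
theorem schur_test {K : ι → ι → ℝ≥0∞} {x y : ℝ} (hx : 0 ≤ x) (hy : 0 ≤ y) (hxy : x + y ≤ 1)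
    (w₁ w₂ : ι → ι → ℝ≥0∞) (A M₁ M₂ : ℝ)
    (hK : ∀ k j, K k j ≤ ENNReal.ofReal A * (w₁ k j ^ x * w₂ k j ^ y))
    (h₁ : ∀ k, ∑' j, w₁ k j ≤ ENNReal.ofReal M₁) (h₂ : ∀ j, ∑' k, w₂ k j ≤ ENNReal.ofReal M₂) :
    BilBdd K x y := by
  refine BilBdd.mono ?_ A hK
  refine ⟨M₁.toNNReal + M₂.toNNReal + 1, fun f h hf hh => ?_⟩
  have hz : 0 ≤ 1 - x - y := by linarith
  calc _ ≤ ∑' k, ∑' j, (w₁ k j * h k + w₂ k j * f j + f j * h k) := by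
        refine ENNReal.tsum_le_tsum fun k => ENNReal.tsum_le_tsum fun j => ?_
        refine le_trans (le_of_eq ?_) (geom_le_add hx hy hz (by ring) _ _ _)
        rw [ENNReal.mul_rpow_of_nonneg _ _ hx, ENNReal.mul_rpow_of_nonneg _ _ hy,
          ENNReal.mul_rpow_of_nonneg _ _ hz]
        have e1 : f j ^ (1 - x) = f j ^ y * f j ^ (1 - x - y) := by
          rw [← ENNReal.rpow_add_of_nonneg _ _ hy hz]; congr 1; ring
        have e2 : h k ^ (1 - y) = h k ^ x * h k ^ (1 - x - y) := by
          rw [← ENNReal.rpow_add_of_nonneg _ _ hx hz]; congr 1; ring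
        rw [e1, e2]
        ring
    _ = (∑' k, ∑' j, w₁ k j * h k) + (∑' k, ∑' j, w₂ k j * f j) + ∑' k, ∑' j, f j * h k := by
        simp_rw [ENNReal.tsum_add]
    _ ≤ ENNReal.ofReal M₁ + ENNReal.ofReal M₂ + 1 := by
        gcongr
        · calc ∑' k, ∑' j, w₁ k j * h k ≤ ∑' k, ENNReal.ofReal M₁ * h k := by
                refine ENNReal.tsum_le_tsum fun k => ?_
                rw [ENNReal.tsum_mul_right]
                gcongr
                exact h₁ k
            _ ≤ ENNReal.ofReal M₁ * 1 := by
                rw [ENNReal.tsum_mul_left]; gcongr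
            _ = _ := mul_one _
        · rw [ENNReal.tsum_comm]
          calc ∑' j, ∑' k, w₂ k j * f j ≤ ∑' j, ENNReal.ofReal M₂ * f j := by
                refine ENNReal.tsum_le_tsum fun j => ?_
                rw [ENNReal.tsum_mul_right]
                gcongr
                exact h₂ j
            _ ≤ ENNReal.ofReal M₂ * 1 := by
                rw [ENNReal.tsum_mul_left]; gcongr
            _ = _ := mul_one _
        · simp_rw [ENNReal.tsum_mul_right, ENNReal.tsum_mul_left]
          calc _ ≤ (1 : ℝ≥0∞) * 1 := by gcongr
            _ = 1 := one_mul 1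
    _ = _ := by
        simp [ENNReal.ofReal]

end abstract_kernels

/-! ### Sums of translates -/

theorem tsum_sub_left {n : ℕ} (F : (Fin n → ℤ) → ℝ≥0∞) (k : Fin n → ℤ) :
    ∑' j, F (k - j) = ∑' j, F j :=
  (Equiv.subLeft k).tsum_eq F

theorem tsum_sub_right {n : ℕ} (F : (Fin n → ℤ) → ℝ≥0∞) (j : Fin n → ℤ) :
    ∑' k, F (k - j) = ∑' k, F k :=
  (Equiv.subRight j).tsum_eq F

theorem exists_exp {a : ℝ} (ha : 1 ≤ a) : ∃ l : ℝ, 0 ≤ l ∧ a = Real.exp l :=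
  ⟨Real.log a, Real.log_nonneg ha, (Real.exp_log (by linarith)).symm⟩

/-! ### The region where one frequency dominates -/

/-- The kernel `⟨k⟩^{-A} ⟨j⟩^{-B}` restricted to `⟨j⟩ ≤ ⟨k⟩`. -/
noncomputable def farKer (n : ℕ) (A B : ℝ) (k j : Fin n → ℤ) : ℝ≥0∞ :=
  if zbr j ≤ zbr k then ENNReal.ofReal (zbr k ^ (-A) * zbr j ^ (-B)) else 0

/-- The Schur weights are `⟨j⟩^{ε-n} ⟨k⟩^{-ε}` and `⟨k⟩^{-n-ε} ⟨j⟩^ε` with `ε = A - n y > 0`. -/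
theorem far_bil (n : ℕ) {x y A B : ℝ} (hx : 0 ≤ x) (hy : 0 ≤ y) (hxy : x + y ≤ 1)
    (hA : n * y < A) (hAB : n * (x + y) ≤ A + B) : BilBdd (farKer n A B) x y := by
  set ε := A - n * y with hε
  have hε0 : 0 < ε := by linarith
  obtain ⟨C₁, hC₁, h₁⟩ := sum_ball_le n (n - ε) (by linarith)
  obtain ⟨C₂, hC₂, h₂⟩ := sum_tail_le n (n + ε) (by linarith)
  refine schur_test hx hy hxy
    (fun k j => if zbr j ≤ zbr k then ENNReal.ofReal (zbr j ^ (-(n - ε)) * zbr k ^ (-ε)) else 0)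
    (fun k j => if zbr j ≤ zbr k then ENNReal.ofReal (zbr k ^ (-(n + ε)) * zbr j ^ ε) else 0)
    1 C₁ C₂ ?_ ?_ ?_
  · intro k j
    unfold farKer
    split_ifs with h
    · have hk := zbr_pos k
      have hj := zbr_pos j
      rw [ENNReal.ofReal_rpow_of_pos (by positivity), ENNReal.ofReal_rpow_of_pos (by positivity),
        ← ENNReal.ofReal_mul (by positivity), ← ENNReal.ofReal_mul (by positivity), one_mul]
      apply ENNReal.ofReal_le_ofReal
      obtain ⟨a, ha0, ha⟩ := exists_exp (zbr_one_le k)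
      obtain ⟨b, hb0, hb⟩ := exists_exp (zbr_one_le j)
      rw [ha, hb, Real.exp_le_exp] at h
      rw [ha, hb]
      simp only [← Real.exp_mul, ← Real.exp_add, Real.exp_le_exp]
      have e1 : 0 ≤ ε * (1 - x - y) * (a - b) :=
        mul_nonneg (mul_nonneg hε0.le (by linarith)) (by linarith)
      have e2 : 0 ≤ b * (B - n * x + ε) := mul_nonneg hb0 (by linarith)
      have e3 : A = n * y + ε := by rw [hε]; ring
      rw [e3]
      linarith
    · exact zero_le
  · intro k
    have hk := zbr_pos k
    calc _ = ∑' j, ENNReal.ofReal (zbr k ^ (-ε)) *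
          (if zbr j ≤ zbr k then ENNReal.ofReal (zbr j ^ (-(n - ε))) else 0) := by
          refine tsum_congr fun j => ?_
          have hj := zbr_pos j
          split_ifs
          · rw [← ENNReal.ofReal_mul (by positivity), mul_comm]
          · simp
      _ ≤ ENNReal.ofReal (zbr k ^ (-ε)) * ENNReal.ofReal (C₁ * zbr k ^ (n - (n - ε))) := by
          rw [ENNReal.tsum_mul_left]
          gcongr
          exact h₁ _ hk
      _ = ENNReal.ofReal C₁ := by
          rw [← ENNReal.ofReal_mul (by positivity), mul_left_comm, ← Real.rpow_add hk]
          simp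
  · intro j
    have hj := zbr_pos j
    calc _ = ∑' k, ENNReal.ofReal (zbr j ^ ε) *
          (if zbr j ≤ zbr k then ENNReal.ofReal (zbr k ^ (-(n + ε))) else 0) := by
          refine tsum_congr fun k => ?_
          have hk := zbr_pos k
          split_ifs
          · rw [← ENNReal.ofReal_mul (by positivity), mul_comm]
          · simp
      _ ≤ ENNReal.ofReal (zbr j ^ ε) * ENNReal.ofReal (C₂ * zbr j ^ (n - (n + ε))) := by
          rw [ENNReal.tsum_mul_left]
          gcongr
          exact h₂ _ hj
      _ = ENNReal.ofReal C₂ := by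
          rw [← ENNReal.ofReal_mul (by positivity), mul_left_comm, ← Real.rpow_add hj]
          simp

/-- The endpoint `A = n y` of `far_bil`, which requires `y = 0`. -/
theorem far_bil_endpoint (n : ℕ) {x B : ℝ} (hx : 0 ≤ x) (hx1 : x ≤ 1) (hB : n * x < B) :
    BilBdd (farKer n 0 B) x 0 := by
  have hn : (0 : ℝ) ≤ n := Nat.cast_nonneg n
  have hB0 : 0 < B := lt_of_le_of_lt (by positivity) hB
  rcases hx.eq_or_lt with rfl | hx
  · refine schur_test le_rfl le_rfl (by norm_num) (fun _ _ => 0) (fun _ _ => 0) 1 1 1 ?_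
      (by simp) (by simp)
    intro k j
    unfold farKer
    split_ifs
    · simp only [neg_zero, Real.rpow_zero, one_mul, ENNReal.rpow_zero, mul_one]
      exact ENNReal.ofReal_le_ofReal
        (Real.rpow_le_one_of_one_le_of_nonpos (zbr_one_le j) (by linarith))
    · exact zero_le
  · obtain ⟨C, hC, h⟩ := sum_all_le n (B / x) (by rwa [lt_div_iff₀ hx])
    refine schur_test hx.le le_rfl (by linarith)
      (fun _ j => ENNReal.ofReal (zbr j ^ (-(B / x)))) (fun _ _ => 0) 1 C 1 ?_ (fun _ => h)
      (by simp)
    intro k j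
    have hj := zbr_pos j
    unfold farKer
    split_ifs
    · simp only [neg_zero, Real.rpow_zero, one_mul, ENNReal.rpow_zero, mul_one, ENNReal.ofReal_one]
      rw [ENNReal.ofReal_rpow_of_pos (by positivity), ← Real.rpow_mul hj.le]
      apply le_of_eq
      congr 2
      field_simp
    · exact zero_le

/-! ### The region of comparable frequencies -/

/-- The kernel `⟨k⟩^{-e} ⟨k-j⟩^{λ-n}` restricted to `⟨k-j⟩ ≲ ⟨k⟩, ⟨j⟩`. -/
noncomputable def nearKer (n : ℕ) (lam e : ℝ) (k j : Fin n → ℤ) : ℝ≥0∞ :=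
  if zbr (k - j) ≤ 10 * zbr k ∧ zbr (k - j) ≤ 10 * zbr j then
    ENNReal.ofReal (zbr k ^ (-e) * zbr (k - j) ^ (lam - n)) else 0

theorem near_bil_zero (n : ℕ) {lam e : ℝ} (hlam : lam ≤ n) (he : 0 ≤ e) :
    BilBdd (nearKer n lam e) 0 0 := by
  refine schur_test le_rfl le_rfl (by norm_num) (fun _ _ => 0) (fun _ _ => 0) 1 1 1 ?_
    (by simp) (by simp)
  intro k j
  unfold nearKer
  split_ifs
  · simp only [ENNReal.rpow_zero, mul_one]
    apply ENNReal.ofReal_le_ofReal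
    have hk := zbr_pos k
    exact mul_le_one₀ (Real.rpow_le_one_of_one_le_of_nonpos (zbr_one_le k) (by linarith))
      (Real.rpow_nonneg (zbr_pos _).le _)
      (Real.rpow_le_one_of_one_le_of_nonpos (zbr_one_le _) (by linarith))
  · exact zero_le

/-- Young's inequality: here `⟨m⟩^{λ-n}` raised to the power `1/(x+y)` is summable. -/
theorem near_bil_summable (n : ℕ) {lam x y : ℝ} (hx : 0 ≤ x) (hy : 0 ≤ y) (hxy : x + y ≤ 1)
    (hz : 0 < x + y) (h : lam + n * (x + y) < n) : BilBdd (nearKer n lam 0) x y := by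
  obtain ⟨C, hC, hs⟩ := sum_all_le n ((n - lam) / (x + y)) (by rw [lt_div_iff₀ hz]; linarith)
  have e1 := fun k : Fin n → ℤ =>
    tsum_sub_left (fun m : Fin n → ℤ => ENNReal.ofReal (zbr m ^ (-((n - lam) / (x + y))))) k
  have e2 := fun k : Fin n → ℤ =>
    tsum_sub_right (fun m : Fin n → ℤ => ENNReal.ofReal (zbr m ^ (-((n - lam) / (x + y))))) k
  refine schur_test hx hy hxy
    (fun k j => ENNReal.ofReal (zbr (k - j) ^ (-((n - lam) / (x + y)))))
    (fun k j => ENNReal.ofReal (zbr (k - j) ^ (-((n - lam) / (x + y))))) 1 C C ?_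
    (fun k => (e1 k).trans_le hs) (fun j => (e2 j).trans_le hs)
  intro k j
  have hd := zbr_pos (k - j)
  unfold nearKer
  split_ifs
  · rw [ENNReal.ofReal_rpow_of_pos (by positivity), ENNReal.ofReal_rpow_of_pos (by positivity),
      ← ENNReal.ofReal_mul (by positivity), ← ENNReal.ofReal_mul (by positivity), one_mul,
      ← Real.rpow_mul hd.le, ← Real.rpow_mul hd.le, ← Real.rpow_add hd]
    apply le_of_eq
    rw [neg_zero, Real.rpow_zero, one_mul]
    congr 2
    field_simp
    ring
  · exact zero_le

/-- The factor `⟨k⟩^{-e}` pays for the divergence of the sum of the convolution kernel over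
`⟨k-j⟩ ≲ ⟨k⟩`, so that the critical line is included. -/
theorem near_bil_pos (n : ℕ) {lam e x y : ℝ} (hx : 0 ≤ x) (hy : 0 ≤ y) (hxy : x + y ≤ 1)
    (hz : 0 < x + y) (he : 0 < e) (h : lam + n * (x + y) ≤ n + e) :
    BilBdd (nearKer n lam e) x y := by
  set r := e / (x + y) with hr
  have hr0 : 0 < r := by positivity
  have her : e = r * (x + y) := by rw [hr]; field_simp
  obtain ⟨C, hC, hs⟩ := sum_ball_le n (n - r) (by linarith)
  have key : ∀ k : Fin n → ℤ, ENNReal.ofReal (zbr k ^ (-r)) *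
      (∑' m : Fin n → ℤ, if zbr m ≤ 10 * zbr k then ENNReal.ofReal (zbr m ^ (-(n - r))) else 0)
      ≤ ENNReal.ofReal (C * 10 ^ r) := by
    intro k
    have hk := zbr_pos k
    refine (mul_le_mul' le_rfl (hs (10 * zbr k) (by positivity))).trans (le_of_eq ?_)
    rw [← ENNReal.ofReal_mul (by positivity), sub_sub_cancel,
      Real.mul_rpow (by norm_num) hk.le]
    congr 1
    calc _ = C * 10 ^ r * (zbr k ^ (-r) * zbr k ^ r) := by ring
      _ = _ := by rw [← Real.rpow_add hk]; simp
  refine schur_test hx hy hxy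
    (fun k j => ENNReal.ofReal (zbr k ^ (-r)) *
      if zbr (k - j) ≤ 10 * zbr k then ENNReal.ofReal (zbr (k - j) ^ (-(n - r))) else 0)
    (fun k j => ENNReal.ofReal (zbr j ^ (-r)) *
      if zbr (k - j) ≤ 10 * zbr j then ENNReal.ofReal (zbr (k - j) ^ (-(n - r))) else 0)
    (22 ^ (r * y)) (C * 10 ^ r) (C * 10 ^ r) ?_ ?_ ?_
  · intro k j
    have hk := zbr_pos k
    have hj := zbr_pos j
    have hd := zbr_pos (k - j)
    unfold nearKer
    split_ifs with h0 h1 h2 h2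
    · have hjk : zbr j ≤ 22 * zbr k := by
        have := zbr_le_of_sub j k
        rw [zbr_sub_comm] at this
        linarith
      rw [← ENNReal.ofReal_mul (by positivity), ← ENNReal.ofReal_mul (by positivity),
        ENNReal.ofReal_rpow_of_pos (by positivity), ENNReal.ofReal_rpow_of_pos (by positivity),
        ← ENNReal.ofReal_mul (by positivity), ← ENNReal.ofReal_mul (by positivity)]
      apply ENNReal.ofReal_le_ofReal
      obtain ⟨a, ha0, ha⟩ := exists_exp (zbr_one_le k)
      obtain ⟨b, hb0, hb⟩ := exists_exp (zbr_one_le j)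
      obtain ⟨d, hd0, hd'⟩ := exists_exp (zbr_one_le (k - j))
      obtain ⟨P, hP0, hP⟩ := exists_exp (show (1 : ℝ) ≤ 22 by norm_num)
      rw [ha, hb, hP, ← Real.exp_add, Real.exp_le_exp] at hjk
      rw [ha, hb, hd', hP]
      simp only [← Real.exp_mul, ← Real.exp_add, Real.exp_le_exp]
      have e1 : 0 ≤ r * y * (P + a - b) :=
        mul_nonneg (mul_nonneg hr0.le hy) (by linarith)
      have e2 : 0 ≤ d * (e - n * (x + y) - lam + n) := mul_nonneg hd0 (by linarith)
      rw [her] at e2 ⊢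
      linarith
    all_goals first | exact zero_le | (exfalso; tauto)
  · intro k
    rw [ENNReal.tsum_mul_left]
    refine le_trans (le_of_eq ?_) (key k)
    rw [tsum_sub_left (fun m : Fin n → ℤ => if zbr m ≤ 10 * zbr k then
      ENNReal.ofReal (zbr m ^ (-(n - r))) else 0) k]
  · intro j
    rw [ENNReal.tsum_mul_left]
    refine le_trans (le_of_eq ?_) (key j)
    rw [tsum_sub_right (fun m : Fin n → ℤ => if zbr m ≤ 10 * zbr j then
      ENNReal.ofReal (zbr m ^ (-(n - r))) else 0) j]

/-! ### The Hardy–Littlewood–Sobolev endpoint -/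

/-- The pointwise inequality behind the endpoint. The kernel `d^{-n(x+y)}` is cut at the radius `R`
with `R^{-n} = φ`. Inside, `η ≤ φ` is used; outside, `φ^{-x} d^{-n(x+y)} η^{1-y}` is a weighted
geometric mean. -/
theorem hls_point {n x y d R φ η : ℝ} (hy : 0 < y) (hy1 : y ≤ 1)
    (hd : 0 < d) (hR : 0 < R) (hφ : φ = R ^ (-n)) (hη : 0 ≤ η) (hηφ : η ≤ φ) :
    d ^ (-(n * (x + y))) * φ ^ (1 - x) * η ^ (1 - y) ≤
      φ * (R ^ (-(n - n * (x + y))) * (if d ≤ R then d ^ (-(n * (x + y))) else 0) + η +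
        R ^ (n * x / y) * (if R ≤ d then d ^ (-(n * (x + y) / y)) else 0)) := by
  have hφ0 : 0 < φ := by rw [hφ]; positivity
  rcases le_total d R with h | h
  · have h1 : d ^ (-(n * (x + y))) * φ ^ (1 - x) * η ^ (1 - y)
        ≤ φ * (R ^ (-(n - n * (x + y))) * d ^ (-(n * (x + y)))) := by
      calc d ^ (-(n * (x + y))) * φ ^ (1 - x) * η ^ (1 - y)
          ≤ d ^ (-(n * (x + y))) * φ ^ (1 - x) * φ ^ (1 - y) := by
            gcongr
        _ = φ * (R ^ (-(n - n * (x + y))) * d ^ (-(n * (x + y)))) := by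
            have e1 : φ ^ (1 - x) * φ ^ (1 - y) = φ * R ^ (-(n - n * (x + y))) := by
              rw [← Real.rpow_add hφ0, hφ, ← Real.rpow_mul hR.le, ← Real.rpow_add hR]
              congr 1
              ring
            rw [mul_assoc, e1]
            ring
    refine h1.trans ?_
    rw [if_pos h]
    gcongr
    have : 0 ≤ R ^ (n * x / y) * (if R ≤ d then d ^ (-(n * (x + y) / y)) else 0) := by
      split_ifs <;> positivity
    linarith
  · have h1 : d ^ (-(n * (x + y))) * φ ^ (1 - x) * η ^ (1 - y)
        ≤ φ * (η + R ^ (n * x / y) * d ^ (-(n * (x + y) / y))) := by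
      have hp : 0 ≤ R ^ (n * x / y) * d ^ (-(n * (x + y) / y)) := by positivity
      have := Real.geom_mean_le_arith_mean2_weighted hy.le (by linarith : 0 ≤ 1 - y)
        hp hη (by ring)
      calc d ^ (-(n * (x + y))) * φ ^ (1 - x) * η ^ (1 - y)
          = φ * ((R ^ (n * x / y) * d ^ (-(n * (x + y) / y))) ^ y * η ^ (1 - y)) := by
            rw [Real.mul_rpow (by positivity) (by positivity), ← Real.rpow_mul hR.le,
              ← Real.rpow_mul hd.le]
            have e1 : φ ^ (1 - x) = φ * R ^ (n * x) := by
              rw [Real.rpow_sub hφ0, Real.rpow_one]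
              nth_rewrite 2 [hφ]
              rw [← Real.rpow_mul hR.le, div_eq_mul_inv, ← Real.rpow_neg hR.le]
              congr 2
              ring
            rw [e1]
            have e2 : n * x / y * y = n * x := by field_simp
            have e3 : -(n * (x + y) / y) * y = -(n * (x + y)) := by field_simp
            rw [e2, e3]
            ring
        _ ≤ _ := by
            gcongr
            refine this.trans ?_
            nlinarith
    refine h1.trans ?_
    rw [if_pos h]
    gcongr
    have : 0 ≤ R ^ (-(n - n * (x + y))) * (if d ≤ R then d ^ (-(n * (x + y))) else 0) := by
      split_ifs <;> positivity
    linarith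

/-- The endpoint for the part of the bilinear form where `h k ≤ f j`. -/
theorem hls_half (n : ℕ) (hn : 1 ≤ n) {x y : ℝ} (hx : 0 < x) (hy : 0 < y) (hxy : x + y < 1) :
    ∃ M : ℝ≥0, ∀ f h : (Fin n → ℤ) → ℝ≥0∞, ∑' j, f j ≤ 1 → ∑' k, h k ≤ 1 →
    ∑' j, ∑' k, (if h k ≤ f j then
      ENNReal.ofReal (zbr (k - j) ^ (-(n * (x + y)))) * f j ^ (1 - x) * h k ^ (1 - y) else 0)
      ≤ M := by
  have hn0 : (0 : ℝ) < n := by exact_mod_cast hn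
  obtain ⟨C₁, hC₁, h₁⟩ := sum_ball_le n (n * (x + y)) (by nlinarith)
  obtain ⟨C₂, hC₂, h₂⟩ := sum_tail_le n (n * (x + y) / y) (by
    rw [lt_div_iff₀ hy]; nlinarith)
  refine ⟨C₁.toNNReal + 1 + C₂.toNNReal, fun f h hf hh => ?_⟩
  have inner : ∀ j, ∑' k, (if h k ≤ f j then
      ENNReal.ofReal (zbr (k - j) ^ (-(n * (x + y)))) * f j ^ (1 - x) * h k ^ (1 - y) else 0)
      ≤ f j * (ENNReal.ofReal C₁ + 1 + ENNReal.ofReal C₂) := by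
    intro j
    rcases eq_or_ne (f j) 0 with h0 | h0
    · have : ∀ k, (if h k ≤ f j then
          ENNReal.ofReal (zbr (k - j) ^ (-(n * (x + y)))) * f j ^ (1 - x) * h k ^ (1 - y)
          else 0) = 0 := by
        intro k
        rw [h0, ENNReal.zero_rpow_of_pos (by linarith)]
        simp
      simp [this]
    have hfj : f j ≤ 1 := (ENNReal.le_tsum j).trans hf
    have hft : f j ≠ ∞ := (hfj.trans_lt ENNReal.one_lt_top).ne
    set φ := (f j).toReal with hφ
    have hφ0 : 0 < φ := ENNReal.toReal_pos h0 hft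
    have hfφ : f j = ENNReal.ofReal φ := (ENNReal.ofReal_toReal hft).symm
    set R := φ ^ (-(1 / (n : ℝ))) with hR
    have hR0 : 0 < R := by positivity
    have hφR : φ = R ^ (-(n : ℝ)) := by
      rw [hR, ← Real.rpow_mul hφ0.le]
      rw [show -(1 / (n : ℝ)) * -(n : ℝ) = 1 by field_simp, Real.rpow_one]
    calc _ ≤ ∑' k, f j * (ENNReal.ofReal (R ^ (-(n - n * (x + y)))) *
            (if zbr (k - j) ≤ R then ENNReal.ofReal (zbr (k - j) ^ (-(n * (x + y)))) else 0)
          + h k + ENNReal.ofReal (R ^ (n * x / y)) *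
            (if R ≤ zbr (k - j) then ENNReal.ofReal (zbr (k - j) ^ (-(n * (x + y) / y)))
              else 0)) := by
          refine ENNReal.tsum_le_tsum fun k => ?_
          by_cases hle : h k ≤ f j
          swap
          · rw [if_neg hle]
            exact zero_le
          rw [if_pos hle]
          have hd := zbr_pos (k - j)
          have hht : h k ≠ ∞ := (hle.trans_lt hft.lt_top).ne
          set η := (h k).toReal with hη
          have hη0 : 0 ≤ η := ENNReal.toReal_nonneg
          have hhη : h k = ENNReal.ofReal η := (ENNReal.ofReal_toReal hht).symm
          have hηφ : η ≤ φ := (ENNReal.toReal_le_toReal hht hft).mpr hle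
          have := hls_point (x := x) hy (by linarith) hd hR0 hφR hη0 hηφ
          rw [hfφ, hhη, ENNReal.ofReal_rpow_of_nonneg hφ0.le (by linarith),
            ENNReal.ofReal_rpow_of_nonneg hη0 (by linarith),
            ← ENNReal.ofReal_mul (by positivity), ← ENNReal.ofReal_mul (by positivity)]
          refine (ENNReal.ofReal_le_ofReal this).trans (le_of_eq ?_)
          rw [ENNReal.ofReal_mul hφ0.le, ENNReal.ofReal_add, ENNReal.ofReal_add,
            ENNReal.ofReal_mul (by positivity), ENNReal.ofReal_mul (by positivity)]
          · congr 3
            · congr 1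
              split_ifs <;> simp
            · split_ifs <;> simp
          all_goals positivity
      _ ≤ _ := by
          rw [ENNReal.tsum_mul_left, ENNReal.tsum_add, ENNReal.tsum_add, ENNReal.tsum_mul_left,
            ENNReal.tsum_mul_left]
          gcongr
          · rw [tsum_sub_right (fun m : Fin n → ℤ => if zbr m ≤ R then
              ENNReal.ofReal (zbr m ^ (-(n * (x + y)))) else 0) j]
            refine (mul_le_mul' le_rfl (h₁ R hR0)).trans (le_of_eq ?_)
            rw [← ENNReal.ofReal_mul (by positivity), mul_left_comm, ← Real.rpow_add hR0]
            simp
          · rw [tsum_sub_right (fun m : Fin n → ℤ => if R ≤ zbr m then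
              ENNReal.ofReal (zbr m ^ (-(n * (x + y) / y))) else 0) j]
            refine (mul_le_mul' le_rfl (h₂ R hR0)).trans (le_of_eq ?_)
            rw [← ENNReal.ofReal_mul (by positivity), mul_left_comm, ← Real.rpow_add hR0]
            rw [show n * x / y + (n - n * (x + y) / y) = 0 by field_simp; ring]
            simp
  calc _ ≤ ∑' j, f j * (ENNReal.ofReal C₁ + 1 + ENNReal.ofReal C₂) :=
        ENNReal.tsum_le_tsum inner
    _ ≤ 1 * (ENNReal.ofReal C₁ + 1 + ENNReal.ofReal C₂) := by
        rw [ENNReal.tsum_mul_right]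
        gcongr
    _ = _ := by simp [ENNReal.ofReal]

/-- The discrete Hardy–Littlewood–Sobolev inequality, by splitting the form into `h k ≤ f j` and its
transpose. -/
theorem hls (n : ℕ) (hn : 1 ≤ n) {x y : ℝ} (hx : 0 < x) (hy : 0 < y) (hxy : x + y < 1) :
    BilBdd (fun k j : Fin n → ℤ => ENNReal.ofReal (zbr (k - j) ^ (-(n * (x + y))))) x y := by
  obtain ⟨M₁, h₁⟩ := hls_half n hn hx hy hxy
  obtain ⟨M₂, h₂⟩ := hls_half n hn hy hx (by linarith : y + x < 1)
  refine ⟨M₁ + M₂, fun f h hf hh => ?_⟩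
  have a₁ := h₁ f h hf hh
  have a₂ := h₂ h f hh hf
  rw [ENNReal.tsum_comm] at a₁
  rw [ENNReal.coe_add]
  refine le_trans ?_ (add_le_add a₁ a₂)
  rw [← ENNReal.tsum_add]
  refine ENNReal.tsum_le_tsum fun k => ?_
  rw [← ENNReal.tsum_add]
  refine ENNReal.tsum_le_tsum fun j => ?_
  rw [zbr_sub_comm j k, add_comm y x]
  rcases le_total (h k) (f j) with hle | hle
  · rw [if_pos hle]
    exact le_self_add
  · rw [if_pos hle, mul_right_comm _ (f j ^ _)]
    exact le_add_self

/-! ### Sufficiency -/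

/-- The weighted kernel `⟨k⟩^σ ⟨k-j⟩^{λ-n} ⟨j⟩^τ`. -/
noncomputable def wKer (n : ℕ) (lam σ τ : ℝ) (k j : Fin n → ℤ) : ℝ≥0∞ :=
  ENNReal.ofReal (zbr k ^ σ * zbr (k - j) ^ (lam - n) * zbr j ^ τ)

/-- The admissible parameters, in the variables `x = 1 - 1/p`, `y = 1/q`, `σ = s`, `τ = -t`. In
these variables the condition is invariant under the transposition `(x, σ) ↔ (y, τ)`. -/
structure Good (n lam x y σ τ : ℝ) : Prop where
  hst : σ + τ ≤ 0
  hU : lam + (n * y + σ) ≤ n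
  hU' : lam + (n * y + σ) = n → y = 0
  hV : lam + (n * x + τ) ≤ n
  hV' : lam + (n * x + τ) = n → x = 0
  hW : lam + (n * y + σ) + (n * x + τ) ≤ n
  hW' : lam + (n * y + σ) + (n * x + τ) = n →
    0 < n * y + σ ∧ 0 < n * x + τ ∧ x + y ≤ 1 ∧ (σ + τ = 0 → x ≠ 0 ∧ y ≠ 0)

theorem Good.transpose {n lam x y σ τ : ℝ} (G : Good n lam x y σ τ) : Good n lam y x τ σ where
  hst := by linarith [G.hst]
  hU := G.hV
  hU' := G.hV'
  hV := G.hU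
  hV' := G.hU'
  hW := by linarith [G.hW]
  hW' h := by
    obtain ⟨h1, h2, h3, h4⟩ := G.hW' (by linarith)
    exact ⟨h2, h1, by linarith, fun h5 => (h4 (by linarith)).symm⟩

theorem Good.far {n : ℕ} {lam x y σ τ : ℝ} (hx : 0 ≤ x) (hy : 0 ≤ y) (hxy : x + y ≤ 1)
    (G : Good n lam x y σ τ) : BilBdd (farKer n (n - lam - σ) (-τ)) x y := by
  rcases G.hU.lt_or_eq with h | h
  · exact far_bil n hx hy hxy (by linarith) (by linarith [G.hW])
  · obtain rfl := G.hU' h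
    have hτ : n * x + τ < 0 := by
      have h1 := G.hW
      rcases (show n * x + τ ≤ 0 by linarith).lt_or_eq with h2 | h2
      · exact h2
      · have := (G.hW' (by linarith)).2.1
        linarith
    rw [show (n : ℝ) - lam - σ = 0 by linarith]
    exact far_bil_endpoint n hx (by linarith) (by linarith)

theorem Good.near {n : ℕ} (hn : 1 ≤ n) {lam x y σ τ : ℝ} (hlam : 0 < lam) (hlamn : lam < n)
    (hx : 0 ≤ x) (hy : 0 ≤ y)
    (hxy : x + y ≤ 1) (G : Good n lam x y σ τ) : BilBdd (nearKer n lam (-(σ + τ))) x y := by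
  have hn0 : (0 : ℝ) < n := by exact_mod_cast hn
  rcases (add_nonneg hx hy).eq_or_lt with hz | hz
  · obtain rfl : x = 0 := by linarith
    obtain rfl : y = 0 := by linarith
    exact near_bil_zero n hlamn.le (by linarith [G.hst])
  rcases G.hst.lt_or_eq with h | h
  · exact near_bil_pos n hx hy hxy hz (by linarith) (by linarith [G.hW])
  · rw [h, neg_zero]
    rcases G.hW.lt_or_eq with h' | h'
    · exact near_bil_summable n hx hy hxy hz (by linarith)
    · obtain ⟨-, -, -, h3⟩ := G.hW' h'
      obtain ⟨hx0, hy0⟩ := h3 h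
      have hx1 : 0 < x := lt_of_le_of_ne hx hx0.symm
      have hy1 : 0 < y := lt_of_le_of_ne hy hy0.symm
      have hz1 : x + y < 1 := by
        by_contra! hc
        nlinarith
      refine (hls n hn hx1 hy1 hz1).mono 1 fun k j => ?_
      rw [ENNReal.ofReal_one, one_mul]
      unfold nearKer
      split_ifs
      · rw [neg_zero, Real.rpow_zero, one_mul, show lam - n = -(n * (x + y)) by linarith]
      · exact zero_le

/-- The kernel splits into its two far parts and its near part. -/
theorem wKer_le (n : ℕ) (lam σ τ : ℝ) : ∃ c : ℝ, ∀ k j : Fin n → ℤ,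
    wKer n lam σ τ k j ≤ ENNReal.ofReal c * (farKer n (n - lam - σ) (-τ) k j +
      farKer n (n - lam - τ) (-σ) j k + nearKer n lam (-(σ + τ)) k j) := by
  refine ⟨4 ^ |lam - n| + 4 ^ |τ|, fun k j => ?_⟩
  have hk := zbr_pos k
  have hj := zbr_pos j
  have hd := zbr_pos (k - j)
  have hle := zbr_sub_le k j
  have hle1 := zbr_le_of_sub k j
  have hle2 := zbr_le_of_sub j k
  rw [zbr_sub_comm j k] at hle2
  rcases le_or_gt (4 * zbr j) (zbr k) with h1 | h1
  · have hcmp := rpow_compare hk (by norm_num : (1 : ℝ) ≤ 4) (b := zbr (k - j))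
      (by linarith) (by linarith) (lam - n)
    have : wKer n lam σ τ k j ≤
        ENNReal.ofReal (4 ^ |lam - n| + 4 ^ |τ|) * farKer n (n - lam - σ) (-τ) k j := by
      unfold wKer farKer
      rw [if_pos (by linarith), ← ENNReal.ofReal_mul (by positivity)]
      apply ENNReal.ofReal_le_ofReal
      calc zbr k ^ σ * zbr (k - j) ^ (lam - n) * zbr j ^ τ
          ≤ zbr k ^ σ * (4 ^ |lam - n| * zbr k ^ (lam - n)) * zbr j ^ τ := by gcongr
        _ = 4 ^ |lam - n| * (zbr k ^ (-(n - lam - σ)) * zbr j ^ (- -τ)) := by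
            rw [show -(n - lam - σ) = σ + (lam - n) by ring, Real.rpow_add hk, neg_neg]
            ring
        _ ≤ _ := by
            gcongr
            exact le_add_of_nonneg_right (by positivity)
    refine this.trans (mul_le_mul' le_rfl ?_)
    rw [add_assoc]
    exact le_self_add
  rcases le_or_gt (4 * zbr k) (zbr j) with h2 | h2
  · have hcmp := rpow_compare hj (by norm_num : (1 : ℝ) ≤ 4) (b := zbr (k - j))
      (by linarith) (by linarith) (lam - n)
    have : wKer n lam σ τ k j ≤
        ENNReal.ofReal (4 ^ |lam - n| + 4 ^ |τ|) * farKer n (n - lam - τ) (-σ) j k := by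
      unfold wKer farKer
      rw [if_pos (by linarith), ← ENNReal.ofReal_mul (by positivity)]
      apply ENNReal.ofReal_le_ofReal
      calc zbr k ^ σ * zbr (k - j) ^ (lam - n) * zbr j ^ τ
          ≤ zbr k ^ σ * (4 ^ |lam - n| * zbr j ^ (lam - n)) * zbr j ^ τ := by gcongr
        _ = 4 ^ |lam - n| * (zbr j ^ (-(n - lam - τ)) * zbr k ^ (- -σ)) := by
            rw [show -(n - lam - τ) = τ + (lam - n) by ring, Real.rpow_add hj, neg_neg]
            ring
        _ ≤ _ := by
            gcongr
            exact le_add_of_nonneg_right (by positivity)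
    refine this.trans (mul_le_mul' le_rfl ?_)
    exact le_add_right le_add_self
  · have hcmp := rpow_compare hk (by norm_num : (1 : ℝ) ≤ 4) (b := zbr j)
      (by linarith) (by linarith) τ
    have : wKer n lam σ τ k j ≤
        ENNReal.ofReal (4 ^ |lam - n| + 4 ^ |τ|) * nearKer n lam (-(σ + τ)) k j := by
      unfold wKer nearKer
      rw [if_pos (by constructor <;> linarith), ← ENNReal.ofReal_mul (by positivity)]
      apply ENNReal.ofReal_le_ofReal
      calc zbr k ^ σ * zbr (k - j) ^ (lam - n) * zbr j ^ τ
          ≤ zbr k ^ σ * zbr (k - j) ^ (lam - n) * (4 ^ |τ| * zbr k ^ τ) := by gcongr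
        _ = 4 ^ |τ| * (zbr k ^ (- -(σ + τ)) * zbr (k - j) ^ (lam - n)) := by
            rw [neg_neg, Real.rpow_add hk]
            ring
        _ ≤ _ := by
            gcongr
            exact le_add_of_nonneg_left (by positivity)
    exact this.trans (mul_le_mul' le_rfl le_add_self)

theorem Good.bil_of_le {n : ℕ} (hn : 1 ≤ n) {lam x y σ τ : ℝ} (hlam : 0 < lam) (hlamn : lam < n)
    (hx : 0 ≤ x) (hy : 0 ≤ y) (hxy : x + y ≤ 1) (G : Good n lam x y σ τ) :
    BilBdd (wKer n lam σ τ) x y := by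
  obtain ⟨c, hc⟩ := wKer_le n lam σ τ
  exact BilBdd.mono (((G.far hx hy hxy).add
    (G.transpose.far hy hx (by linarith)).transpose).add (G.near hn hlam hlamn hx hy hxy)) c hc

/-- Hölder's inequality with a weight `w ∈ ℓ¹` lowers `x` to `x'`. -/
theorem BilBdd.lower {ι : Type*} {K K' : ι → ι → ℝ≥0∞} {x x' y C : ℝ} (H : BilBdd K' x' y)
    (hx' : x' ≤ x) (hx : x ≤ 1) (w : ι → ℝ≥0∞) (hw : ∑' j, w j ≤ ENNReal.ofReal C)
    (hK : ∀ k j, K k j ≤ K' k j * w j ^ (x - x')) : BilBdd K x y := by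
  obtain ⟨M, hM⟩ := H
  set c : ℝ≥0∞ := 1 + ENNReal.ofReal C with hc
  have hc0 : c ≠ 0 := by simp [hc]
  have hct : c ≠ ∞ := by simp [hc]
  have hcr : c ^ (1 - x') ≠ ∞ := ENNReal.rpow_ne_top_of_nonneg (by linarith) hct
  refine ⟨(c ^ (1 - x')).toNNReal * M, fun f h hf hh => ?_⟩
  have hg : ∑' j, (f j + w j) / c ≤ 1 := by
    simp_rw [div_eq_mul_inv]
    rw [ENNReal.tsum_mul_right, ENNReal.tsum_add]
    calc _ ≤ c * c⁻¹ := by rw [hc]; gcongr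
      _ ≤ 1 := ENNReal.mul_inv_le_one _
  rw [ENNReal.coe_mul, ENNReal.coe_toNNReal hcr]
  refine le_trans ?_ (mul_le_mul' le_rfl (hM _ h hg hh))
  rw [← ENNReal.tsum_mul_left]
  refine ENNReal.tsum_le_tsum fun k => ?_
  rw [← ENNReal.tsum_mul_left]
  refine ENNReal.tsum_le_tsum fun j => ?_
  calc K k j * f j ^ (1 - x) * h k ^ (1 - y)
      ≤ K' k j * w j ^ (x - x') * f j ^ (1 - x) * h k ^ (1 - y) := by
        gcongr
        exact hK k j
    _ ≤ K' k j * (f j + w j) ^ (x - x') * (f j + w j) ^ (1 - x) * h k ^ (1 - y) := by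
        gcongr
        · exact le_add_self
        · exact le_self_add
    _ = K' k j * (f j + w j) ^ (1 - x') * h k ^ (1 - y) := by
        rw [mul_assoc (K' k j), ← ENNReal.rpow_add_of_nonneg _ _ (by linarith) (by linarith)]
        congr 3
        ring
    _ = K' k j * (c * ((f j + w j) / c)) ^ (1 - x') * h k ^ (1 - y) := by
        rw [ENNReal.mul_div_cancel hc0 hct]
    _ = _ := by
        rw [ENNReal.mul_rpow_of_nonneg _ _ (by linarith)]
        ring

theorem Good.bil {n : ℕ} (hn : 1 ≤ n) {lam x y σ τ : ℝ} (hlam : 0 < lam) (hlamn : lam < n)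
    (hx : 0 ≤ x) (hx1 : x ≤ 1) (hy : 0 ≤ y) (hy1 : y ≤ 1) (G : Good n lam x y σ τ) :
    BilBdd (wKer n lam σ τ) x y := by
  have hn0 : (0 : ℝ) < n := by exact_mod_cast hn
  rcases le_or_gt (x + y) 1 with hxy | hxy
  · exact G.bil_of_le hn hlam hlamn hx hy hxy
  -- Here both inequalities below are strict, which leaves room to lower `x` to `1 - y`.
  have hV : lam + (n * x + τ) < n := lt_of_le_of_ne G.hV fun h => by
    have := G.hV' h
    linarith
  have hW : lam + (n * y + σ) + (n * x + τ) < n := lt_of_le_of_ne G.hW fun h => by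
    have := (G.hW' h).2.2.1
    linarith
  obtain ⟨ε, hε0, hε1, hε2⟩ : ∃ ε : ℝ, 0 < ε ∧ ε < n - (lam + (n * x + τ)) ∧
      ε < n - (lam + (n * y + σ) + (n * x + τ)) := by
    obtain ⟨ε, h1, h2⟩ := exists_between (lt_min (sub_pos.mpr hV) (sub_pos.mpr hW))
    exact ⟨ε, h1, h2.trans_le (min_le_left _ _), h2.trans_le (min_le_right _ _)⟩
  set δ := x - (1 - y) with hδ
  have hδ0 : 0 < δ := by linarith
  have hδ1 : δ ≤ 1 := by linarith
  have hεδ : ε * δ ≤ ε := by nlinarith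
  have hy' : x = 1 - y + δ := by rw [hδ]; ring
  have hyn : n * x = n - n * y + n * δ := by rw [hy']; ring
  have hyn' : (n : ℝ) * (1 - y) = n - n * y := by ring
  have G' : Good n lam (1 - y) y σ (τ + (n + ε) * δ) := by
    constructor
    · linarith
    · exact G.hU
    · exact G.hU'
    · linarith
    · intro h; linarith
    · linarith
    · intro h; linarith
  obtain ⟨C, hC, hs⟩ := sum_all_le n (n + ε) (by linarith)
  refine (G'.bil_of_le hn hlam hlamn (by linarith) hy (by linarith)).lower (by linarith) hx1
    (fun j => ENNReal.ofReal (zbr j ^ (-(n + ε)))) hs fun k j => ?_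
  have hj := zbr_pos j
  have hk := zbr_pos k
  have hd := zbr_pos (k - j)
  unfold wKer
  rw [ENNReal.ofReal_rpow_of_pos (by positivity), ← ENNReal.ofReal_mul (by positivity),
    ← Real.rpow_mul hj.le, mul_assoc _ (zbr j ^ _), ← Real.rpow_add hj]
  apply le_of_eq
  congr 3
  ring

/-! ### Necessity: test sequences -/

/-- The kernel `wKer` without its diagonal. -/
noncomputable def oKer (n : ℕ) (lam σ τ : ℝ) (k j : Fin n → ℤ) : ℝ≥0∞ :=
  if j = k then 0 else wKer n lam σ τ k j

/-- Boundedness of the off-diagonal bilinear form, in homogeneous form. -/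
def HomBdd (n : ℕ) (lam x y σ τ : ℝ) : Prop :=
  ∃ M : ℝ≥0, ∀ f h : (Fin n → ℤ) → ℝ≥0∞,
    ∑' k, ∑' j, oKer n lam σ τ k j * f j ^ (1 - x) * h k ^ (1 - y)
      ≤ M * (∑' j, f j) ^ (1 - x) * (∑' k, h k) ^ (1 - y)

theorem oKer_swap (n : ℕ) (lam σ τ : ℝ) (k j : Fin n → ℤ) :
    oKer n lam σ τ k j = oKer n lam τ σ j k := by
  unfold oKer wKer
  rw [zbr_sub_comm k j]
  by_cases h : j = k
  · simp [h]
  · rw [if_neg h, if_neg (Ne.symm h)]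
    congr 1
    ring

theorem HomBdd.transpose {n : ℕ} {lam x y σ τ : ℝ} (H : HomBdd n lam x y σ τ) :
    HomBdd n lam y x τ σ := by
  obtain ⟨M, hM⟩ := H
  refine ⟨M, fun f h => ?_⟩
  have := hM h f
  rw [ENNReal.tsum_comm] at this
  rw [mul_right_comm]
  refine le_trans (le_of_eq ?_) this
  refine tsum_congr fun j => tsum_congr fun k => ?_
  rw [oKer_swap n lam τ σ, mul_right_comm]

theorem oKer_of_ne {n : ℕ} {lam σ τ : ℝ} {k j : Fin n → ℤ} (h : j ≠ k) :
    oKer n lam σ τ k j =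
      ENNReal.ofReal (zbr k ^ σ * zbr (k - j) ^ (lam - n) * zbr j ^ τ) := by
  unfold oKer wKer
  rw [if_neg h]

/-- Testing against a point mass in `f`. -/
theorem test_delta {n : ℕ} {lam x y σ τ : ℝ} (H : HomBdd n lam x y σ τ) :
    ∃ M : ℝ≥0, ∀ (m : Fin n → ℤ) (h : (Fin n → ℤ) → ℝ≥0∞),
      ∑' k, oKer n lam σ τ k m * h k ^ (1 - y) ≤ M * (∑' k, h k) ^ (1 - y) := by
  classical
  obtain ⟨M, hM⟩ := H
  refine ⟨M, fun m h => ?_⟩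
  have := hM (Pi.single m 1) h
  rw [tsum_pi_single, ENNReal.one_rpow, mul_one] at this
  refine le_trans (ENNReal.tsum_le_tsum fun k => ?_) this
  refine le_trans (le_of_eq ?_) (ENNReal.le_tsum m)
  simp

/-- Testing against two point masses. -/
theorem test_delta_delta {n : ℕ} {lam x y σ τ : ℝ} (H : HomBdd n lam x y σ τ) :
    ∃ M : ℝ≥0, ∀ k m : Fin n → ℤ, oKer n lam σ τ k m ≤ M := by
  classical
  obtain ⟨M, hM⟩ := test_delta H
  refine ⟨M, fun k m => ?_⟩
  have := hM m (Pi.single k 1)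
  rw [tsum_pi_single, ENNReal.one_rpow, mul_one] at this
  refine le_trans (le_of_eq ?_) ((ENNReal.le_tsum k).trans this)
  simp

theorem exists_rpow_gt {e : ℝ} (he : 0 < e) (K : ℝ) :
    ∃ R₀ : ℝ, 1 ≤ R₀ ∧ ∀ R, R₀ ≤ R → K < R ^ e := by
  obtain ⟨R₀, h⟩ := Filter.eventually_atTop.mp
    ((tendsto_rpow_atTop he).eventually (Filter.eventually_gt_atTop K))
  exact ⟨max R₀ 1, le_max_right _ _, fun R hR => h R ((le_max_left _ _).trans hR)⟩

theorem exists_zbr_ge (n : ℕ) (hn : 1 ≤ n) (R : ℝ) : ∃ m : Fin n → ℤ, R ≤ zbr m := by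
  refine ⟨fun _ => ⌈R⌉, ?_⟩
  have := abs_le_zbr (fun _ : Fin n => ⌈R⌉) ⟨0, hn⟩
  exact (Int.le_ceil R).trans ((le_abs_self _).trans this)

theorem zbr_zero (n : ℕ) : zbr (0 : Fin n → ℤ) = 1 := by
  simp [zbr]

theorem ofReal_le_nnreal {a : ℝ} {M : ℝ≥0} (h : ENNReal.ofReal a ≤ M) : a ≤ M := by
  rw [← ENNReal.ofReal_coe_nnreal] at h
  exact (ENNReal.ofReal_le_ofReal_iff M.coe_nonneg).mp h

/-- Two neighbouring points far from the origin have a kernel entry of size `⟨m⟩^{σ+τ}`. -/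
theorem nec_st {n : ℕ} (hn : 1 ≤ n) {lam x y σ τ : ℝ} (H : HomBdd n lam x y σ τ) :
    σ + τ ≤ 0 := by
  classical
  obtain ⟨M, hM⟩ := test_delta_delta H
  by_contra! hc
  set e : Fin n → ℤ := Pi.single ⟨0, hn⟩ 1 with he
  have hze : zbr e = Real.sqrt 2 := by
    have : ∑ i, ((e i : ℝ)) ^ 2 = 1 := by
      rw [Finset.sum_eq_single ⟨0, hn⟩]
      · simp [he]
      · intro i _ hi
        simp [he, hi]
      · simp
    rw [zbr, this]
    norm_num
  have hs2 : Real.sqrt 2 ≤ 2 := by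
    rw [Real.sqrt_le_left (by norm_num)]
    norm_num
  have he0 : e ≠ 0 := by
    intro h
    have := congrFun h ⟨0, hn⟩
    simp [he] at this
  set c := Real.sqrt 2 ^ (lam - n) / 6 ^ |σ| with hcdef
  have hc0 : 0 < c := by positivity
  obtain ⟨R₀, hR₀, hR⟩ := exists_rpow_gt hc (M / c)
  obtain ⟨m, hm⟩ := exists_zbr_ge n hn R₀
  have hgt := hR _ hm
  have hm0 := zbr_pos m
  have hm1 := zbr_one_le m
  have hk0 := zbr_pos (m + e)
  have hk1 := zbr_one_le (m + e)
  have h1 := zbr_add_le m e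
  have h2 := zbr_le_of_sub m (m + e)
  rw [show m - (m + e) = -e by abel, zbr_neg] at h2
  have hb := hM (m + e) m
  rw [oKer_of_ne (by simpa using he0), add_sub_cancel_left, hze] at hb
  have hb' := ofReal_le_nnreal hb
  have hcmp := rpow_compare hk0 (by norm_num : (1 : ℝ) ≤ 6) (b := zbr m)
    (by linarith) (by linarith) σ
  have : zbr m ^ (σ + τ) ≤ M / c := by
    rw [le_div_iff₀ hc0]
    refine le_trans ?_ hb'
    calc zbr m ^ (σ + τ) * c
        = zbr m ^ σ * Real.sqrt 2 ^ (lam - n) * zbr m ^ τ / 6 ^ |σ| := by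
          rw [Real.rpow_add hm0, hcdef]; ring
      _ ≤ (6 ^ |σ| * zbr (m + e) ^ σ) * Real.sqrt 2 ^ (lam - n) * zbr m ^ τ / 6 ^ |σ| := by
          gcongr
      _ = _ := by field_simp
  linarith

/-- A kernel column that dominates `c ⟨k-v⟩^{-ny}` on arbitrarily large balls around `v` forces
`y = 0`: the critical sequence `h = ⟨k-v⟩^{-n}`, cut off at larger and larger radii, has mass
`Λ → ∞` with `Λ ≲ Λ^{1-y}`. -/
theorem crit_test {n : ℕ} (hn : 1 ≤ n) {lam x y σ τ : ℝ} (H : HomBdd n lam x y σ τ)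
    (hy : 0 ≤ y) {c : ℝ} (hc : 0 < c)
    (hK : ∀ R : ℝ, ∃ m v : Fin n → ℤ, ∀ k, 2 ≤ zbr (k - v) → zbr (k - v) < R →
      ENNReal.ofReal (c * zbr (k - v) ^ (-(n * y))) ≤ oKer n lam σ τ k m) : y = 0 := by
  by_contra hne
  have hy0 : 0 < y := lt_of_le_of_ne hy (Ne.symm hne)
  obtain ⟨M, hM⟩ := test_delta H
  obtain ⟨L, Q, c₁, C₁, hL, hQ, hc₁, hC₁, -, hlow, hup⟩ := critSeq_mass n hn
  obtain ⟨R₀, hR₀, hR⟩ := exists_rpow_gt hy0 (M / c)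
  obtain ⟨N, hN⟩ := exists_nat_ge (R₀ / c₁)
  rw [div_le_iff₀ hc₁] at hN
  set Λ := ∑' k, critSeq n Q N k with hΛ
  have hΛt : Λ ≠ ∞ := ((hup N).trans_lt ENNReal.ofReal_lt_top).ne
  set l := Λ.toReal with hl
  have hΛl : Λ = ENNReal.ofReal l := (ENNReal.ofReal_toReal hΛt).symm
  have hl1 : R₀ ≤ l := by
    have := hlow N
    rw [← hΛ, hΛl, ENNReal.ofReal_le_ofReal_iff ENNReal.toReal_nonneg] at this
    linarith
  have hl0 : 0 < l := by linarith
  obtain ⟨m, v, hmv⟩ := hK (2 * Q ^ N)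
  have key : ENNReal.ofReal c * Λ ≤ M * Λ ^ (1 - y) := by
    have := hM m (fun k => critSeq n Q N (k - v))
    rw [tsum_sub_right (critSeq n Q N) v] at this
    refine le_trans ?_ this
    rw [hΛ, ← tsum_sub_right (critSeq n Q N) v, ← ENNReal.tsum_mul_left]
    refine ENNReal.tsum_le_tsum fun k => ?_
    have hd := zbr_pos (k - v)
    by_cases hk : 2 ≤ zbr (k - v) ∧ zbr (k - v) < 2 * Q ^ N
    · unfold critSeq
      rw [if_pos hk]
      refine le_trans (le_of_eq ?_) (mul_le_mul' (hmv k hk.1 hk.2) le_rfl)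
      rw [ENNReal.ofReal_rpow_of_pos (by positivity), ← ENNReal.ofReal_mul (by positivity),
        ← ENNReal.ofReal_mul (by positivity), ← Real.rpow_mul hd.le, mul_assoc,
        ← Real.rpow_add hd]
      congr 3
      ring
    · unfold critSeq
      rw [if_neg hk]
      simp
  rw [hΛl, ENNReal.ofReal_rpow_of_pos hl0, ← ENNReal.ofReal_mul hc.le,
    ← ENNReal.ofReal_coe_nnreal, ← ENNReal.ofReal_mul M.coe_nonneg,
    ENNReal.ofReal_le_ofReal_iff (by positivity), Real.rpow_sub hl0, Real.rpow_one] at key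
  have h1 := hR l hl1
  rw [div_lt_iff₀ hc] at h1
  have h2 : 0 < l ^ y := by positivity
  have h3 : c * l * l ^ y ≤ M * l := by
    calc c * l * l ^ y ≤ M * (l / l ^ y) * l ^ y := by gcongr
      _ = M * l := by field_simp
  nlinarith

/-- The column `j = 0` decays no faster than `⟨k⟩^{-ny}`, so that `crit_test` applies. -/
theorem nec_U' {n : ℕ} (hn : 1 ≤ n) {lam x y σ τ : ℝ} (H : HomBdd n lam x y σ τ)
    (hy : 0 ≤ y) (h : n ≤ lam + (n * y + σ)) : y = 0 := by
  refine crit_test hn H hy one_pos fun R => ⟨0, 0, fun k hk2 _ => ?_⟩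
  rw [sub_zero] at hk2
  have hk0 : (0 : Fin n → ℤ) ≠ k := by
    rintro rfl
    rw [zbr_zero] at hk2
    linarith
  rw [oKer_of_ne hk0, sub_zero, zbr_zero, Real.one_rpow, mul_one, one_mul,
    ← Real.rpow_add (zbr_pos k)]
  exact ENNReal.ofReal_le_ofReal
    (Real.rpow_le_rpow_of_exponent_le (zbr_one_le k) (by linarith))

theorem nec_U {n : ℕ} (hn : 1 ≤ n) {lam x y σ τ : ℝ} (H : HomBdd n lam x y σ τ)
    (hy : 0 ≤ y) : lam + (n * y + σ) ≤ n := by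
  by_contra! hc
  obtain rfl := nec_U' hn H hy hc.le
  obtain ⟨M, hM⟩ := test_delta_delta H
  obtain ⟨R₀, hR₀, hR⟩ := exists_rpow_gt (show 0 < σ + (lam - n) by linarith) M
  obtain ⟨k, hk⟩ := exists_zbr_ge n hn (max R₀ 2)
  have hk2 := (le_max_right _ _).trans hk
  have hk0 : (0 : Fin n → ℤ) ≠ k := by
    rintro rfl
    rw [zbr_zero] at hk2
    linarith
  have hb := hM k 0
  rw [oKer_of_ne hk0, sub_zero, zbr_zero, Real.one_rpow, mul_one,
    ← Real.rpow_add (zbr_pos k)] at hb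
  have := hR _ ((le_max_left _ _).trans hk)
  have := ofReal_le_nnreal hb
  linarith

/-- Summing the kernel over one shell `⟨j⟩ ~ ⟨k⟩` gains the volume factor `⟨k⟩^n`. -/
theorem shell_row (n : ℕ) (lam σ τ e L : ℝ) (hlamn : lam < n) (hL : 1 ≤ L)
    (hcount : ∀ R : ℝ, 1 ≤ R → ENNReal.ofReal (R ^ (n : ℝ)) ≤
      ∑' k : Fin n → ℤ, (if R ≤ zbr k ∧ zbr k ≤ L * R then 1 else 0)) :
    ∃ c : ℝ, 0 < c ∧ ∀ (k : Fin n → ℤ) (g : (Fin n → ℤ) → ℝ≥0∞),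
      (∀ j, 2 * zbr k ≤ zbr j → zbr j ≤ 2 * L * zbr k → ENNReal.ofReal (zbr j ^ e) ≤ g j) →
      ENNReal.ofReal (c * zbr k ^ (σ + τ + lam + e)) ≤ ∑' j, oKer n lam σ τ k j * g j := by
  have hL0 : 0 < L := by linarith
  refine ⟨(6 * L) ^ (lam - n) * ((2 * L) ^ |τ + e|)⁻¹ * 2 ^ (n : ℝ), by positivity,
    fun k g hg => ?_⟩
  have hk := zbr_pos k
  have hk1 := zbr_one_le k
  set D := zbr k ^ σ * (6 * L * zbr k) ^ (lam - n) * (((2 * L) ^ |τ + e|)⁻¹ * zbr k ^ (τ + e))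
    with hD
  have hD0 : 0 ≤ D := by positivity
  have h1 : ∀ j, ENNReal.ofReal D * (if 2 * zbr k ≤ zbr j ∧ zbr j ≤ L * (2 * zbr k) then 1 else 0)
      ≤ oKer n lam σ τ k j * g j := by
    intro j
    split_ifs with h
    swap
    · simp
    obtain ⟨ha, hb⟩ := h
    have hj := zbr_pos j
    have hd := zbr_pos (k - j)
    have hne : j ≠ k := by
      rintro rfl
      linarith
    have hd' : zbr (k - j) ≤ 6 * L * zbr k := by
      have := zbr_sub_le k j
      nlinarith
    have hcmp := rpow_compare hj (by linarith : (1 : ℝ) ≤ 2 * L) (b := zbr k)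
      (by linarith) (by nlinarith) (τ + e)
    rw [oKer_of_ne hne, mul_one]
    refine le_trans ?_ (mul_le_mul' le_rfl (hg j ha (by linarith)))
    rw [← ENNReal.ofReal_mul (by positivity)]
    apply ENNReal.ofReal_le_ofReal
    calc D ≤ zbr k ^ σ * zbr (k - j) ^ (lam - n) *
          (((2 * L) ^ |τ + e|)⁻¹ * ((2 * L) ^ |τ + e| * zbr j ^ (τ + e))) := by
          have hdd := Real.rpow_le_rpow_of_nonpos hd hd' (by linarith : lam - n ≤ 0)
          rw [hD]
          gcongr
      _ = zbr k ^ σ * zbr (k - j) ^ (lam - n) * zbr j ^ (τ + e) := by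
          rw [inv_mul_cancel_left₀ (by positivity)]
      _ = _ := by
          rw [Real.rpow_add hj]
          ring
  refine le_trans ?_ (ENNReal.tsum_le_tsum h1)
  rw [ENNReal.tsum_mul_left]
  refine le_trans (le_of_eq ?_) (mul_le_mul' le_rfl (hcount (2 * zbr k) (by linarith)))
  rw [← ENNReal.ofReal_mul hD0]
  congr 1
  rw [hD, Real.mul_rpow (by positivity) hk.le, Real.mul_rpow (by positivity) hk.le,
    show σ + τ + lam + e = σ + (lam - n) + (τ + e) + n by ring, Real.rpow_add hk,
    Real.rpow_add hk, Real.rpow_add hk]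
  ring

theorem tsum_crit_top (n : ℕ) (hn : 1 ≤ n) :
    ∑' k : Fin n → ℤ, ENNReal.ofReal (zbr k ^ (-(n : ℝ))) = ∞ := by
  obtain ⟨L, Q, c, C, -, -, hc, -, -, hlow, -⟩ := critSeq_mass n hn
  refine ENNReal.eq_top_of_forall_nnreal_le fun r => ?_
  obtain ⟨N, hN⟩ := exists_nat_ge (r / c)
  rw [div_le_iff₀ hc] at hN
  calc (r : ℝ≥0∞) = ENNReal.ofReal r := ENNReal.ofReal_coe_nnreal.symm
    _ ≤ ENNReal.ofReal (c * N) := ENNReal.ofReal_le_ofReal (by linarith)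
    _ ≤ ∑' k, critSeq n Q N k := hlow N
    _ ≤ _ := by
      refine ENNReal.tsum_le_tsum fun k => ?_
      unfold critSeq
      split_ifs
      · exact le_rfl
      · exact zero_le

/-- Testing with `f = h = ⟨k⟩^{-n-δ}`, which is summable for every `δ > 0`. -/
theorem nec_W {n : ℕ} (hn : 1 ≤ n) {lam x y σ τ : ℝ} (hlamn : lam < n)
    (H : HomBdd n lam x y σ τ) (hx : 0 ≤ x) (hx1 : x ≤ 1) (hy : 0 ≤ y) (hy1 : y ≤ 1) :
    lam + (n * y + σ) + (n * x + τ) ≤ n := by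
  by_contra! hc
  obtain ⟨M, hM⟩ := H
  obtain ⟨L, -, -, -, hL, -, -, -, hcount, -, -⟩ := critSeq_mass n hn
  set δ := (lam + (n * y + σ) + (n * x + τ) - n) / 2 with hδ
  have hδ0 : 0 < δ := by linarith
  obtain ⟨C, hC, hs⟩ := sum_all_le n (n + δ) (by linarith)
  set f : (Fin n → ℤ) → ℝ≥0∞ := fun k => ENNReal.ofReal (zbr k ^ (-(n + δ))) with hf
  have hpow : ∀ k z, f k ^ z = ENNReal.ofReal (zbr k ^ (-(n + δ) * z)) := by
    intro k z
    have hk := zbr_pos k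
    rw [hf, ENNReal.ofReal_rpow_of_pos (by positivity), ← Real.rpow_mul hk.le]
  obtain ⟨c, hc0, hrow⟩ := shell_row n lam σ τ (-(n + δ) * (1 - x)) L hlamn hL hcount
  have hbad := hM f f
  have hst : ∑' k, f k ≠ ∞ := (hs.trans_lt ENNReal.ofReal_lt_top).ne
  have hfin : M * (∑' j, f j) ^ (1 - x) * (∑' k, f k) ^ (1 - y) ≠ ∞ :=
    ENNReal.mul_ne_top (ENNReal.mul_ne_top ENNReal.coe_ne_top
      (ENNReal.rpow_ne_top_of_nonneg (by linarith) hst))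
      (ENNReal.rpow_ne_top_of_nonneg (by linarith) hst)
  refine hfin (top_le_iff.mp (le_trans ?_ hbad))
  have htop : ∑' k : Fin n → ℤ, ENNReal.ofReal c * ENNReal.ofReal (zbr k ^ (-(n : ℝ))) = ∞ := by
    rw [ENNReal.tsum_mul_left, tsum_crit_top n hn, ENNReal.mul_top]
    simpa using hc0
  rw [← htop]
  refine ENNReal.tsum_le_tsum fun k => ?_
  have hk := zbr_pos k
  rw [ENNReal.tsum_mul_right]
  refine le_trans ?_ (mul_le_mul' (hrow k (fun j => f j ^ (1 - x))
    fun j _ _ => (hpow j _).ge) le_rfl)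
  rw [hpow, ← ENNReal.ofReal_mul hc0.le, ← ENNReal.ofReal_mul (by positivity), mul_assoc,
    ← Real.rpow_add hk]
  apply ENNReal.ofReal_le_ofReal
  gcongr
  · exact zbr_one_le k
  · have : 0 ≤ δ * (x + y) := by positivity
    nlinarith

/-- On the critical line, testing with two truncated critical sequences gives `x + y ≤ 1`. -/
theorem nec_xy {n : ℕ} (hn : 1 ≤ n) {lam x y σ τ : ℝ} (hlamn : lam < n)
    (H : HomBdd n lam x y σ τ) (hx1 : x ≤ 1) (hy1 : y ≤ 1)
    (hW : lam + (n * y + σ) + (n * x + τ) = n) : x + y ≤ 1 := by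
  by_contra! hc
  obtain ⟨M, hM⟩ := H
  obtain ⟨L, Q, c₁, C, hL, hQ, hc₁, hC, hcount, hlow, hup⟩ := critSeq_mass n hn
  obtain ⟨c, hc0, hrow⟩ := shell_row n lam σ τ (-n * (1 - x)) L hlamn hL hcount
  have hQ0 : 0 < Q := by linarith
  have main : ∀ N : ℕ, c * (c₁ * N) ≤ M * (C * (N + 1)) ^ (1 - x) * (C * N) ^ (1 - y) := by
    intro N
    have hbad := hM (critSeq n Q (N + 1)) (critSeq n Q N)
    have hr : M * (∑' j, critSeq n Q (N + 1) j) ^ (1 - x) * (∑' k, critSeq n Q N k) ^ (1 - y)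
        ≤ ENNReal.ofReal (M * (C * (N + 1)) ^ (1 - x) * (C * N) ^ (1 - y)) := by
      rw [ENNReal.ofReal_mul (by positivity), ENNReal.ofReal_mul M.coe_nonneg, ENNReal.ofReal_coe_nnreal,
        ← ENNReal.ofReal_rpow_of_nonneg (by positivity) (by linarith),
        ← ENNReal.ofReal_rpow_of_nonneg (by positivity) (by linarith)]
      have := hup (N + 1)
      push_cast at this
      gcongr
      exact hup N
    have hl : ENNReal.ofReal (c * (c₁ * N)) ≤ ∑' k, ∑' j, oKer n lam σ τ k j *
        critSeq n Q (N + 1) j ^ (1 - x) * critSeq n Q N k ^ (1 - y) := by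
      rw [ENNReal.ofReal_mul hc0.le]
      refine (mul_le_mul' le_rfl (hlow N)).trans ?_
      rw [← ENNReal.tsum_mul_left]
      refine ENNReal.tsum_le_tsum fun k => ?_
      have hk := zbr_pos k
      rw [ENNReal.tsum_mul_right]
      by_cases hkN : 2 ≤ zbr k ∧ zbr k < 2 * Q ^ N
      · refine le_trans ?_ (mul_le_mul' (hrow k (fun j => critSeq n Q (N + 1) j ^ (1 - x))
          fun j hj1 hj2 => ?_) le_rfl)
        · unfold critSeq
          rw [if_pos hkN, ENNReal.ofReal_rpow_of_pos (by positivity), ← Real.rpow_mul hk.le,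
            ← ENNReal.ofReal_mul hc0.le, ← ENNReal.ofReal_mul (by positivity), mul_assoc,
            ← Real.rpow_add hk]
          apply le_of_eq
          congr 3
          linarith
        · have hj := zbr_pos j
          have hjN : 2 ≤ zbr j ∧ zbr j < 2 * Q ^ (N + 1) := by
            refine ⟨by linarith [hkN.1], ?_⟩
            rw [pow_succ]
            have : Q * zbr k < Q * (2 * Q ^ N) := by
              gcongr
              exact hkN.2
            rw [hQ] at this ⊢
            linarith
          unfold critSeq
          rw [if_pos hjN, ENNReal.ofReal_rpow_of_pos (by positivity), ← Real.rpow_mul hj.le]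
      · unfold critSeq
        rw [if_neg hkN]
        simp
    have := hl.trans (hbad.trans hr)
    rwa [ENNReal.ofReal_le_ofReal_iff (by positivity)] at this
  set K := M * (2 * C) ^ (1 - x) * C ^ (1 - y) / (c * c₁) with hK
  obtain ⟨R₀, hR₀, hR⟩ := exists_rpow_gt (show 0 < x + y - 1 by linarith) K
  obtain ⟨N, hN⟩ := exists_nat_ge R₀
  have hN1 : (1 : ℝ) ≤ N := hR₀.trans hN
  have hN0 : (0 : ℝ) < N := by linarith
  have h1 := hR N hN
  rw [hK, div_lt_iff₀ (by positivity)] at h1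
  have h2 : c * (c₁ * N) ≤ M * ((2 * C) ^ (1 - x) * N ^ (1 - x)) * (C ^ (1 - y) * N ^ (1 - y)) := by
    refine (main N).trans ?_
    rw [← Real.mul_rpow (by positivity) hN0.le, ← Real.mul_rpow (by positivity) hN0.le]
    have hCN : C * ((N : ℝ) + 1) ≤ 2 * C * N := by nlinarith
    have h0 := Real.rpow_le_rpow (by positivity) hCN (by linarith : 0 ≤ 1 - x)
    exact mul_le_mul_of_nonneg_right (mul_le_mul_of_nonneg_left h0 M.coe_nonneg) (by positivity)
  have h3 : (N : ℝ) ^ (1 - x) * N ^ (1 - y) * N ^ (x + y - 1) = N := by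
    rw [← Real.rpow_add hN0, ← Real.rpow_add hN0]
    rw [show 1 - x + (1 - y) + (x + y - 1) = 1 by ring, Real.rpow_one]
  have h4 : 0 < (N : ℝ) ^ (1 - x) * N ^ (1 - y) := by positivity
  have h5 := mul_lt_mul_of_pos_left h1 h4
  have h6 : (N : ℝ) ^ (1 - x) * N ^ (1 - y) * (N ^ (x + y - 1) * (c * c₁)) = c * (c₁ * N) := by
    rw [← mul_assoc, h3]
    ring
  rw [h6] at h5
  linarith

/-- If `n y + σ = 0` and `λ - n + τ = 0`, the column of a far point `m` is `≳ ⟨k⟩^{-ny}` on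
`⟨k⟩ ≪ ⟨m⟩`. -/
theorem nec_U_zero {n : ℕ} (hn : 1 ≤ n) {lam x y σ τ : ℝ} (hlamn : lam < n)
    (H : HomBdd n lam x y σ τ) (hy : 0 ≤ y) (hU : n * y + σ = 0) (hτ : lam + τ = n) : y = 0 := by
  refine crit_test hn H hy (c := 4 ^ (lam - n)) (by positivity) fun R => ?_
  obtain ⟨m, hm⟩ := exists_zbr_ge n hn R
  refine ⟨m, 0, fun k _ hk => ?_⟩
  rw [sub_zero] at hk ⊢
  have hk0 := zbr_pos k
  have hm0 := zbr_pos m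
  have hd := zbr_pos (k - m)
  have hne : m ≠ k := by
    rintro rfl
    linarith
  rw [oKer_of_ne hne]
  apply ENNReal.ofReal_le_ofReal
  have hle : zbr (k - m) ≤ 4 * zbr m := by
    have := zbr_sub_le k m
    linarith
  calc 4 ^ (lam - n) * zbr k ^ (-(n * y))
      = zbr k ^ σ * (4 * zbr m) ^ (lam - n) * zbr m ^ τ := by
        rw [Real.mul_rpow (by norm_num) hm0.le, show -(n * y) = σ by linarith,
          show τ = -(lam - n) by linarith, Real.rpow_neg hm0.le]
        have : zbr m ^ (lam - n) ≠ 0 := by positivity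
        field_simp
    _ ≤ _ := by
        have hdd := Real.rpow_le_rpow_of_nonpos hd hle (by linarith : lam - n ≤ 0)
        gcongr

/-- If `σ + τ = 0` and `λ + n y = n`, the column of a far point `m` is `≳ ⟨k-m⟩^{-ny}` on
`⟨k-m⟩ ≪ ⟨m⟩`. -/
theorem nec_diag {n : ℕ} (hn : 1 ≤ n) {lam x y σ τ : ℝ}
    (H : HomBdd n lam x y σ τ) (hy : 0 ≤ y) (hst : σ + τ = 0) (hlam : lam + n * y = n) :
    y = 0 := by
  refine crit_test hn H hy (c := (4 ^ |σ|)⁻¹) (by positivity) fun R => ?_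
  obtain ⟨m, hm⟩ := exists_zbr_ge n hn (4 * R)
  refine ⟨m, m, fun k hk2 hk => ?_⟩
  have hk0 := zbr_pos k
  have hm0 := zbr_pos m
  have hd := zbr_pos (k - m)
  have hne : m ≠ k := by
    rintro rfl
    rw [sub_self, zbr_zero] at hk2
    linarith
  have h1 := zbr_le_of_sub k m
  have h2 := zbr_le_of_sub m k
  rw [zbr_sub_comm] at h2
  have hcmp := rpow_compare hk0 (by norm_num : (1 : ℝ) ≤ 4) (b := zbr m)
    (by linarith) (by linarith) σ
  rw [oKer_of_ne hne]
  apply ENNReal.ofReal_le_ofReal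
  calc (4 ^ |σ|)⁻¹ * zbr (k - m) ^ (-(n * y))
      = (4 ^ |σ|)⁻¹ * zbr m ^ σ * zbr (k - m) ^ (lam - n) * zbr m ^ τ := by
        rw [show lam - n = -(n * y) by linarith, show τ = -σ by linarith, Real.rpow_neg hm0.le]
        have : zbr m ^ σ ≠ 0 := by positivity
        field_simp
    _ ≤ (4 ^ |σ|)⁻¹ * (4 ^ |σ| * zbr k ^ σ) * zbr (k - m) ^ (lam - n) * zbr m ^ τ := by
        gcongr
    _ = _ := by
        rw [inv_mul_cancel_left₀ (by positivity)]

/-- On the critical line, `n y + σ ≤ 0` would force `n y + σ = 0`, `x = 0` and `y = 0`, hence `σ = 0`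
and `τ = n - λ > 0`, against `σ + τ ≤ 0`. -/
theorem nec_U_pos {n : ℕ} (hn : 1 ≤ n) {lam x y σ τ : ℝ} (hlamn : lam < n)
    (H : HomBdd n lam x y σ τ) (hx : 0 ≤ x) (hy : 0 ≤ y)
    (hW : lam + (n * y + σ) + (n * x + τ) = n) : 0 < n * y + σ := by
  have hV := nec_U hn H.transpose hx
  by_contra! hc
  have hU : n * y + σ = 0 := by linarith
  obtain rfl := nec_U' hn H.transpose hx (by linarith)
  obtain rfl := nec_U_zero hn hlamn H hy hU (by linarith)
  have := nec_st hn H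
  linarith

theorem nec_x {n : ℕ} (hn : 1 ≤ n) {lam x y σ τ : ℝ} (hlamn : lam < n)
    (H : HomBdd n lam x y σ τ) (hy : 0 ≤ y)
    (hW : lam + (n * y + σ) + (n * x + τ) = n) (hst : σ + τ = 0) : x ≠ 0 := by
  rintro rfl
  obtain rfl := nec_diag hn H hy hst (by linarith)
  linarith

theorem HomBdd.good {n : ℕ} (hn : 1 ≤ n) {lam x y σ τ : ℝ} (hlamn : lam < n)
    (hx : 0 ≤ x) (hx1 : x ≤ 1) (hy : 0 ≤ y) (hy1 : y ≤ 1) (H : HomBdd n lam x y σ τ) :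
    Good n lam x y σ τ where
  hst := nec_st hn H
  hU := nec_U hn H hy
  hU' h := nec_U' hn H hy h.ge
  hV := nec_U hn H.transpose hx
  hV' h := nec_U' hn H.transpose hx h.ge
  hW := nec_W hn hlamn H hx hx1 hy hy1
  hW' h := ⟨nec_U_pos hn hlamn H hx hy h, nec_U_pos hn hlamn H.transpose hy hx (by linarith),
    nec_xy hn hlamn H hx1 hy1 h, fun hst => ⟨nec_x hn hlamn H hy h hst,
      nec_x hn hlamn H.transpose hx (by linarith) (by linarith)⟩⟩

/-! ### The operator with weights and the exponent conditions -/

/-- The kernel of `𝓘_λ` with both weights absorbed: it acts from `ℓ^p` to `ℓ^q`. -/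
noncomputable def rKer (n : ℕ) (lam s t : ℝ) (k j : Fin n → ℤ) : ℝ≥0∞ :=
  if j = k then 0 else ENNReal.ofReal (zbr k ^ s * znorm (k - j) ^ (lam - n) * zbr j ^ (-t))

theorem zbr_le_znorm_of_ne {n : ℕ} {k j : Fin n → ℤ} (h : j ≠ k) (e : ℝ) :
    zbr (k - j) ^ e ≤ 2 ^ |e| * znorm (k - j) ^ e ∧
      znorm (k - j) ^ e ≤ 2 ^ |e| * zbr (k - j) ^ e ∧ 0 < znorm (k - j) := by
  obtain ⟨h1, h2⟩ := znorm_compare (k - j) (sub_ne_zero.2 h.symm)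
  have hz := zbr_pos (k - j)
  have hp : 0 < znorm (k - j) := by linarith
  exact ⟨rpow_compare hp one_le_two h2 h1 e, rpow_compare hz one_le_two h1 h2 e, hp⟩

theorem rKer_le (n : ℕ) (lam s t : ℝ) (k j : Fin n → ℤ) :
    rKer n lam s t k j ≤ ENNReal.ofReal (2 ^ |lam - n|) * wKer n lam s (-t) k j := by
  unfold rKer
  split_ifs with h
  · exact zero_le
  obtain ⟨_, h2, hp⟩ := zbr_le_znorm_of_ne h (lam - n)
  have hk := zbr_pos k
  have hj := zbr_pos j
  unfold wKer
  rw [← ENNReal.ofReal_mul (by positivity)]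
  apply ENNReal.ofReal_le_ofReal
  calc zbr k ^ s * znorm (k - j) ^ (lam - n) * zbr j ^ (-t)
      ≤ zbr k ^ s * (2 ^ |lam - n| * zbr (k - j) ^ (lam - n)) * zbr j ^ (-t) := by gcongr
    _ = _ := by ring

theorem oKer_le (n : ℕ) (lam s t : ℝ) (k j : Fin n → ℤ) :
    oKer n lam s (-t) k j ≤ ENNReal.ofReal (2 ^ |lam - n|) * rKer n lam s t k j := by
  unfold oKer rKer
  split_ifs with h
  · exact zero_le
  obtain ⟨h2, _, hp⟩ := zbr_le_znorm_of_ne h (lam - n)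
  have hk := zbr_pos k
  have hj := zbr_pos j
  unfold wKer
  rw [← ENNReal.ofReal_mul (by positivity)]
  apply ENNReal.ofReal_le_ofReal
  calc zbr k ^ s * zbr (k - j) ^ (lam - n) * zbr j ^ (-t)
      ≤ zbr k ^ s * (2 ^ |lam - n| * znorm (k - j) ^ (lam - n)) * zbr j ^ (-t) := by gcongr
    _ = _ := by ring

theorem ofReal_zbr_cancel {n : ℕ} (j : Fin n → ℤ) (t : ℝ) :
    ENNReal.ofReal (zbr j ^ t) * ENNReal.ofReal (zbr j ^ (-t)) = 1 := by
  have hj := zbr_pos j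
  rw [← ENNReal.ofReal_mul (by positivity), ← Real.rpow_add hj]
  simp

theorem lns_dRiesz_eq (n : ℕ) (q : ℝ≥0∞) (lam s t : ℝ) (a b : (Fin n → ℤ) → ℝ≥0∞)
    (hab : ∀ j, a j = b j * ENNReal.ofReal (zbr j ^ (-t))) :
    lns n q s (dRiesz n lam a) = nrm q (fun k => ∑' j, rKer n lam s t k j * b j) := by
  have : (fun k => ∑' j, rKer n lam s t k j * b j)
      = fun k => dRiesz n lam a k * ENNReal.ofReal (zbr k ^ s) := by
    funext k
    unfold dRiesz
    rw [← ENNReal.tsum_mul_right]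
    refine tsum_congr fun j => ?_
    unfold rKer
    split_ifs with h
    · simp
    obtain ⟨_, _, hp⟩ := zbr_le_znorm_of_ne h (lam - n)
    have hk := zbr_pos k
    have hj := zbr_pos j
    rw [hab, ENNReal.ofReal_mul (by positivity), ENNReal.ofReal_mul (by positivity)]
    ring
  rw [this]
  rfl

/-- The substitution `b j = a j ⟨j⟩^t` removes the weights from the norms. -/
theorem bdd_iff_nrm (n : ℕ) (p q : ℝ≥0∞) (lam s t : ℝ) :
    (∃ C : ℝ≥0, ∀ a : (Fin n → ℤ) → ℝ≥0∞, lns n q s (dRiesz n lam a) ≤ C * lns n p t a) ↔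
      ∃ C : ℝ≥0, ∀ b : (Fin n → ℤ) → ℝ≥0∞,
        nrm q (fun k => ∑' j, rKer n lam s t k j * b j) ≤ C * nrm p b := by
  refine exists_congr fun C => ⟨fun H b => ?_, fun H a => ?_⟩
  · have h := H fun j => b j * ENNReal.ofReal (zbr j ^ (-t))
    rw [lns_dRiesz_eq n q lam s t _ b fun _ => rfl] at h
    convert h using 2
    have : b = fun j => b j * ENNReal.ofReal (zbr j ^ (-t)) * ENNReal.ofReal (zbr j ^ t) := by
      funext j
      rw [mul_assoc, mul_comm (ENNReal.ofReal _), ofReal_zbr_cancel, mul_one]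
    conv_lhs => rw [this]
    rfl
  · rw [lns_dRiesz_eq n q lam s t a (fun j => a j * ENNReal.ofReal (zbr j ^ t)) fun j => by
      rw [mul_assoc, ofReal_zbr_cancel, mul_one]]
    exact H _

/-- Multiplying the inequalities of the three conditions by `n` gives exactly the exponent
inequalities of `Good`, with `x = 1 - 1/p`, `y = 1/q`, `σ = s`, `τ = -t`. The condition `𝒞₄` is the
borderline `λ + (ny + σ) + (nx + τ) = n`, and `𝒞₃` is the borderline `λ + (nx + τ) = n`. -/
theorem good_iff_cond {n : ℕ} (hn : 1 ≤ n) {lam : ℝ} (hlam : 0 < lam) (hlamn : lam < n)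
    {p q : ℝ≥0∞} (hq : 1 ≤ q) (t s : ℝ) :
    Good n lam (1 - iv p) (iv q) s (-t) ↔
      (condC1 n lam q p s t ∨ condC3 n lam q p s t ∨ condC4 n lam q p s t) := by
  have hn0 : (0 : ℝ) < n := by positivity
  obtain ⟨l, rfl⟩ : ∃ l, lam = n * l := ⟨lam / n, by field_simp⟩
  obtain ⟨s', rfl⟩ : ∃ s', s = n * s' := ⟨s / n, by field_simp⟩
  obtain ⟨t', rfl⟩ : ∃ t', t = n * t' := ⟨t / n, by field_simp⟩
  have hl : 0 < l := pos_of_mul_pos_right hlam hn0.le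
  have hl1 : l < 1 := by nlinarith
  unfold condC1 condC3 condC4
  simp only [mul_div_cancel_left₀ _ hn0.ne', mul_le_mul_iff_right₀ hn0]
  have e1 : ∀ u : ℝ, (n : ℝ) * l + (n * iv q + n * s') + u = n * (l + iv q + s') + u := by
    intro u; ring
  have hq0 := iv_nonneg q
  have key : ∀ a b : ℝ, (n * a = n * b ↔ a = b) ∧ (n * a ≤ n * b ↔ a ≤ b) ∧ (n * a < n * b ↔ a < b) :=
    fun a b => ⟨mul_right_inj' hn0.ne', mul_le_mul_iff_right₀ hn0, mul_lt_mul_iff_right₀ hn0⟩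
  have U1 : (n : ℝ) * l + (n * iv q + n * s') ≤ n ↔ l + iv q + s' ≤ 1 := by
    rw [← (key _ 1).2.1]; ring_nf
  have U2 : (n : ℝ) * l + (n * iv q + n * s') = n ↔ l + iv q + s' = 1 := by
    rw [← (key _ 1).1]; ring_nf
  have V1 : (n : ℝ) * l + (n * (1 - iv p) + -(n * t')) ≤ n ↔ l ≤ iv p + t' := by
    rw [← (key l _).2.1]; constructor <;> intro h <;> linarith
  have V2 : (n : ℝ) * l + (n * (1 - iv p) + -(n * t')) = n ↔ l = iv p + t' := by
    rw [← (key l _).1]; constructor <;> intro h <;> linarith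
  have W1 : (n : ℝ) * l + (n * iv q + n * s') + (n * (1 - iv p) + -(n * t')) ≤ n ↔
      l + iv q + s' ≤ iv p + t' := by
    rw [← (key _ (iv p + t')).2.1]; constructor <;> intro h <;> linarith
  have W2 : (n : ℝ) * l + (n * iv q + n * s') + (n * (1 - iv p) + -(n * t')) = n ↔
      l + iv q + s' = iv p + t' := by
    rw [← (key _ (iv p + t')).1]; constructor <;> intro h <;> linarith
  have S1 : (n : ℝ) * s' + -(n * t') ≤ 0 ↔ s' ≤ t' := by
    rw [← (key s' _).2.1]; constructor <;> intro h <;> linarith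
  have S2 : (n : ℝ) * s' + -(n * t') = 0 ↔ s' = t' := by
    rw [← (key s' _).1]; constructor <;> intro h <;> linarith
  have P1 : (0 : ℝ) < n * iv q + n * s' ↔ 0 < iv q + s' := by
    rw [← mul_add]; exact mul_pos_iff_of_pos_left hn0
  have P2 : (0 : ℝ) < n * (1 - iv p) + -(n * t') ↔ iv p + t' < 1 := by
    rw [show (n : ℝ) * (1 - iv p) + -(n * t') = n * (1 - (iv p + t')) by ring,
      mul_pos_iff_of_pos_left hn0, sub_pos]
  have T1 : (n : ℝ) * s' = n * t' ↔ s' = t' := (key _ _).1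
  have T2 : (n : ℝ) * t' = n * l - n ↔ t' = l - 1 := by
    rw [← (key t' _).1]; constructor <;> intro h <;> linarith
  have T3 : (n : ℝ) * s' = n - n * l ↔ s' = 1 - l := by
    rw [← (key s' _).1]; constructor <;> intro h <;> linarith
  have X : 1 - iv p = 0 ↔ p = 1 := by
    rw [← iv_eq_one, sub_eq_zero, eq_comm]
  have Y := iv_eq_zero hq
  have G : Good n (n * l) (1 - iv p) (iv q) (n * s') (-(n * t')) ↔
      s' ≤ t' ∧ l + iv q + s' ≤ 1 ∧ (l + iv q + s' = 1 → q = ∞) ∧ l ≤ iv p + t' ∧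
      (l = iv p + t' → p = 1) ∧ l + iv q + s' ≤ iv p + t' ∧ (l + iv q + s' = iv p + t' →
        0 < iv q + s' ∧ iv p + t' < 1 ∧ iv q ≤ iv p ∧ (s' = t' → p ≠ 1 ∧ q ≠ ∞)) := by
    constructor
    · rintro ⟨a1, a2, a3, a4, a5, a6, a7⟩
      rw [S1] at a1; rw [U1] at a2; rw [U2, Y] at a3; rw [V1] at a4; rw [V2, X] at a5
      rw [W1] at a6; rw [W2, P1, P2, S2, Ne, X, Ne, Y] at a7
      refine ⟨a1, a2, a3, a4, a5, a6, fun h => ?_⟩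
      obtain ⟨b1, b2, b3, b4⟩ := a7 h
      exact ⟨b1, b2, by linarith, b4⟩
    · rintro ⟨a1, a2, a3, a4, a5, a6, a7⟩
      refine ⟨S1.2 a1, U1.2 a2, by rwa [U2, Y], V1.2 a4, by rwa [V2, X], W1.2 a6, ?_⟩
      rw [W2, P1, P2, S2, Ne, X, Ne, Y]
      intro h
      obtain ⟨b1, b2, b3, b4⟩ := a7 h
      exact ⟨b1, b2, by linarith, b4⟩
  rw [G, T1, T2, T3]
  constructor
  · rintro ⟨a1, a2, a3, a4, a5, a6, a7⟩
    rcases eq_or_lt_of_le a6 with h6 | h6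
    · obtain ⟨b1, b2, b3, b4⟩ := a7 h6
      exact Or.inr (Or.inr ⟨a1, h6, b3, b1, b2, fun h => (b4 h).symm⟩)
    rcases eq_or_lt_of_le a4 with h4 | h4
    · have hp1 := a5 h4
      have := iv_eq_one.2 hp1
      exact Or.inr (Or.inl ⟨a1, hp1, by linarith, by linarith⟩)
    · refine Or.inl ⟨a1, ?_, a2, fun h => ⟨a3 h, ?_⟩⟩
      · rw [max_eq_left (by linarith : 0 ≤ iv p + t')]
        rcases le_total (iv q + s') 0 with h | h
        · rw [max_eq_right h]; linarith
        · rw [max_eq_left h]; linarith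
      · have := Y.2 (a3 h)
        linarith
  · rintro (⟨a1, a2, a3, a4⟩ | ⟨a1, a2, a3, a4⟩ | ⟨a1, a2, a3, a4, a5, a6⟩)
    · have b0 := le_max_right (iv q + s') 0
      have b1 := le_max_left (iv q + s') 0
      have b2 : 0 < iv p + t' := by
        by_contra! hc
        rw [max_eq_right hc] at a2
        linarith
      rw [max_eq_left b2.le] at a2
      exact ⟨a1, a3, fun h => (a4 h).1, by linarith, fun h => by linarith, by linarith,
        fun h => by linarith⟩
    · have := iv_eq_one.2 a2
      exact ⟨a1, by linarith, fun h => by linarith, by linarith, fun h => a2, by linarith,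
        fun h => by linarith⟩
    · exact ⟨a1, by linarith, fun h => by linarith, by linarith, fun h => by linarith, a2.le,
        fun h => ⟨a4, a5, a3, fun h => (a6 h).symm⟩⟩

/-- sharp boundedness of the discrete fractional integral operator. -/
theorem discrete_fractional_integral_sharp
    (n : ℕ) (hn : 1 ≤ n) (lam : ℝ) (hlam0 : 0 < lam) (hlamn : lam < n)
    (p q : ℝ≥0∞) (hp : 1 ≤ p) (hq : 1 ≤ q) (t s : ℝ) :
    (∃ C : ℝ≥0, ∀ a : (Fin n → ℤ) → ℝ≥0∞,
        lns n q s (dRiesz n lam a) ≤ C * lns n p t a) ↔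
      (condC1 n lam q p s t ∨ condC3 n lam q p s t ∨ condC4 n lam q p s t) := by
  have hx : 0 ≤ 1 - iv p := sub_nonneg.2 (iv_le_one hp)
  have hx1 : 1 - iv p ≤ 1 := sub_le_self _ (iv_nonneg p)
  rw [bdd_iff_nrm, ← good_iff_cond hn hlam0 hlamn hq]
  constructor
  · rintro ⟨C, H⟩
    refine HomBdd.good hn hlamn hx hx1 (iv_nonneg q) (iv_le_one hq)
      ⟨(2 ^ |lam - n| : ℝ).toNNReal * C, fun f h => ?_⟩
    have hb := bil_of_op hp hq (rKer n lam s t) C H f h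
    rw [sub_sub_cancel]
    calc ∑' k, ∑' j, oKer n lam s (-t) k j * f j ^ iv p * h k ^ (1 - iv q)
        ≤ ∑' k, ∑' j, ENNReal.ofReal (2 ^ |lam - n|) *
            (rKer n lam s t k j * f j ^ iv p * h k ^ (1 - iv q)) := by
          refine ENNReal.tsum_le_tsum fun k => ENNReal.tsum_le_tsum fun j => ?_
          rw [← mul_assoc, ← mul_assoc]
          gcongr
          exact oKer_le n lam s t k j
      _ = ENNReal.ofReal (2 ^ |lam - n|) *
            ∑' k, ∑' j, rKer n lam s t k j * f j ^ iv p * h k ^ (1 - iv q) := by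
          simp_rw [ENNReal.tsum_mul_left]
      _ ≤ ENNReal.ofReal (2 ^ |lam - n|) *
            (C * (∑' j, f j) ^ iv p * (∑' k, h k) ^ (1 - iv q)) := by gcongr
      _ = _ := by
          rw [ENNReal.coe_mul, ← mul_assoc, ← mul_assoc]
          rfl
  · intro G
    exact op_of_bil hp hq _ ((G.bil hn hlam0 hlamn hx hx1 (iv_nonneg q) (iv_le_one hq)).mono
      (2 ^ |lam - n|) (rKer_le n lam s t))
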